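/- For every nonzero integer n there exist a group H and an injective group homomorphism BS(1,n) → H such that: H is metabelian (its commutator subgroup is abelian), and H satisfies a quadratic isoperimetric inequality, i.e. there exist a finite generating set S of H, a finite set R of null-homotopic words over S, and a constant C such that every null-homotopic word w ∈ F(S) equals, in F(S), a product of at most C·|w|² + C conjugates of elements of R ∪ R⁻¹. -/

import Mathlib

namespace DehnCT

variable {G : Type*} [Group G] (S : Set G)

/-- The canonical homomorphism `π : F(S) → G` from the free group on `S`. -/
noncomputable def pi : FreeGroup S →* G := FreeGroup.lift Subtype.val

/-- The reduced word length of an element of the free group. -/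
noncomputable def len (w : FreeGroup S) : ℕ :=
  letI := Classical.decEq S
  w.norm

end DehnCT

open DehnCT

/-- The single relator `t x t⁻¹ x⁻ⁿ` of `BS(1,n)`, on the generators
`true ↦ t`, `false ↦ x`. -/
def BSrel (n : ℤ) : Set (FreeGroup Bool) :=
  {FreeGroup.of true * FreeGroup.of false * (FreeGroup.of true)⁻¹ *
    (FreeGroup.of false) ^ (-n)}

/-- The solvable Baumslag–Solitar group `BS(1,n) = ⟨t, x | t x t⁻¹ = xⁿ⟩`. -/
def BS (n : ℤ) : Type := PresentedGroup (BSrel n)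

instance (n : ℤ) : Group (BS n) := by unfold BS; infer_instance

namespace Quad

section Homotopy
variable {G : Type*} [Group G]

/-- Homotopy of words (lists of elements of a group), with a count of the number of elementary
moves; an elementary move replaces a short subword over `K` by another one with the same value. -/
inductive Ht (K : Set G) : ℕ → List G → List G → Prop
  | base (l l' : List G) : (∀ x ∈ l, x ∈ K) → (∀ x ∈ l', x ∈ K) → l.length ≤ 30 →
      l'.length ≤ 30 → l.prod = l'.prod → Ht K 1 l l'
  | refl (l : List G) : Ht K 0 l l
  | symm (k : ℕ) (l l' : List G) : Ht K k l l' → Ht K k l' l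
  | trans (k k' : ℕ) (l l' l'' : List G) : Ht K k l l' → Ht K k' l' l'' → Ht K (k + k') l l''
  | ctx (k : ℕ) (a b l l' : List G) : Ht K k l l' → Ht K k (a ++ l ++ b) (a ++ l' ++ b)
  | mono (k k' : ℕ) (l l' : List G) : k ≤ k' → Ht K k l l' → Ht K k' l l'

variable {K : Set G}

theorem Ht.prod_eq {k : ℕ} {l l' : List G} (h : Ht K k l l') : l.prod = l'.prod := by
  induction h with
  | base l l' _ _ _ _ h => exact h
  | refl l => rfl
  | symm k l l' _ ih => exact ih.symm
  | trans k k' l l' l'' _ _ ih1 ih2 => exact ih1.trans ih2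
  | ctx k a b l l' _ ih => simp [ih]
  | mono k k' l l' _ _ ih => exact ih

theorem Ht.cast {k : ℕ} {l l' m m' : List G} (h : Ht K k l l') (e : m = l) (e' : m' = l') :
    Ht K k m m' := by rw [e, e']; exact h

theorem Ht.tr {k k' : ℕ} {l l' l'' : List G} (h : Ht K k l l') (h' : Ht K k' l' l'') :
    Ht K (k + k') l l'' := Ht.trans _ _ _ _ _ h h'

theorem Ht.sy {k : ℕ} {l l' : List G} (h : Ht K k l l') : Ht K k l' l := Ht.symm _ _ _ h

theorem Ht.le {k k' : ℕ} {l l' : List G} (h : Ht K k l l') (hk : k ≤ k') : Ht K k' l l' :=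
  Ht.mono _ _ _ _ hk h

theorem Ht.left {k : ℕ} {l l' : List G} (a : List G) (h : Ht K k l l') :
    Ht K k (a ++ l) (a ++ l') := by
  simpa using Ht.ctx k a [] l l' h

theorem Ht.right {k : ℕ} {l l' : List G} (b : List G) (h : Ht K k l l') :
    Ht K k (l ++ b) (l' ++ b) := by
  simpa using Ht.ctx k [] b l l' h

theorem Ht.app {k k' : ℕ} {l l' m m' : List G} (h : Ht K k l l') (h' : Ht K k' m m') :
    Ht K (k + k') (l ++ m) (l' ++ m') := (h.right m).tr (h'.left l')

end Homotopy

section Main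

theorem prod_map_inv' {Q : Type*} [CommGroup Q] (l : List Q) :
    (l.map (·⁻¹)).prod = l.prod⁻¹ := by
  induction l with
  | nil => simp
  | cons a l ih => simp only [List.map_cons, List.prod_cons, ih, mul_inv]

variable {G Q : Type*} [Group G] [CommGroup Q] {K : Set G} (j : Q →* G)

/-- The word `λ κ ρ` with `λ`, `ρ` words in `Q`. -/
def cj (lam : List Q) (κ : G) (rho : List Q) : List G := lam.map j ++ [κ] ++ rho.map j

/-- The word `q^l κ q^{-l}`. -/
def W (q : Q) (l : ℕ) (κ : G) : List G := cj j (List.replicate l q) κ (List.replicate l q⁻¹)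

theorem contract (B : Set Q) (hB : ∀ e ∈ B, j e ∈ K) (hBi : ∀ e ∈ B, e⁻¹ ∈ B)
    (T : Set G) (hT : T ⊆ K) (mu : List Q)
    (hmu : ∀ e ∈ mu, e ∈ B ∧ ∀ κ ∈ T, j e * κ * (j e)⁻¹ ∈ T) (κ : G) (hκ : κ ∈ T) :
    ∃ κ' ∈ T, Ht K mu.length (cj j mu κ (mu.reverse.map (·⁻¹))) [κ'] := by
  induction mu with
  | nil => exact ⟨κ, hκ, by simpa [cj] using Ht.refl [κ]⟩
  | cons f mu ih =>
    obtain ⟨κ', hκ', h⟩ := ih (fun e he => hmu e (List.mem_cons_of_mem _ he))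
    have hf := hmu f List.mem_cons_self
    refine ⟨j f * κ' * (j f)⁻¹, hf.2 κ' hκ', ?_⟩
    have h1 := Ht.ctx _ [j f] [j f⁻¹] _ _ h
    have h2 : Ht K 1 ([j f] ++ [κ'] ++ [j f⁻¹]) [j f * κ' * (j f)⁻¹] := by
      apply Ht.base
      · intro x hx
        simp only [List.cons_append, List.nil_append, List.mem_cons, List.not_mem_nil,
          or_false] at hx
        rcases hx with rfl | rfl | rfl
        · exact hB _ hf.1
        · exact hT hκ'
        · exact hB _ (hBi _ hf.1)
      · intro x hx
        simp only [List.mem_cons, List.not_mem_nil, or_false] at hx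
        rw [hx]
        exact hT (hf.2 κ' hκ')
      · simp
      · simp
      · simp [mul_assoc]
    have h3 := h1.tr h2
    simpa [cj] using h3

/-- Data for the main filling theorem. -/
structure Data (K : Set G) (j : Q →* G) where
  B : Set Q
  E0 : Set Q
  T : Fin 3 → Set G
  q : Fin 3 → Q
  CA : ℕ
  hB : ∀ e ∈ B, j e ∈ K
  hBi : ∀ e ∈ B, e⁻¹ ∈ B
  hE0 : E0 ⊆ B
  hT : ∀ i, T i ⊆ K
  hT1 : ∀ i, 1 ∈ T i
  hq : ∀ i, q i ∈ B
  hA : ∀ l l' : List Q, (∀ e ∈ l, e ∈ B) → (∀ e ∈ l', e ∈ B) → l.prod = l'.prod →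
    Ht K (CA * (l.length + l'.length) ^ 2) (l.map j) (l'.map j)
  hc : ∀ i, ∀ e ∈ E0, e * (q i)⁻¹ ∈ B ∧
    ∀ κ ∈ T i, j (e * (q i)⁻¹) * κ * (j (e * (q i)⁻¹))⁻¹ ∈ T i
  hc1 : ∀ i, ∀ κ ∈ T i, j ((q i)⁻¹) * κ * (j ((q i)⁻¹))⁻¹ ∈ T i
  hcs : ∀ i, ∀ κ ∈ T i, ∀ κ' ∈ T i, j ((q i)⁻¹) * (κ * κ') * (j ((q i)⁻¹))⁻¹ ∈ T i
  hcomm : ∀ i k, ∀ κ ∈ T i, ∀ κ' ∈ T k, κ * κ' = κ' * κ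
  hp : ∀ i k, i ≠ k → ∃ p ∈ B, (q i * p⁻¹ ∈ B ∧
      ∀ κ ∈ T i, j (q i * p⁻¹) * κ * (j (q i * p⁻¹))⁻¹ ∈ T i) ∧
    (q k * p⁻¹ ∈ B ∧ ∀ κ ∈ T k, j (q k * p⁻¹) * κ * (j (q k * p⁻¹))⁻¹ ∈ T k)
  hind : ∀ p : Fin 3 → Q, ∀ r : Q, ∀ κ : Fin 3 → G, (∀ i, κ i ∈ T i) →
    (j (p 0) * κ 0 * (j (p 0))⁻¹) * (j (p 1) * κ 1 * (j (p 1))⁻¹) *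
      (j (p 2) * κ 2 * (j (p 2))⁻¹) * j r = 1 → (∀ i, κ i = 1) ∧ r = 1

variable {j} (D : Data K j)

theorem move (L : ℕ) (i : Fin 3) (lam rho tau sig mu : List Q) (κ : G) (hκ : κ ∈ D.T i)
    (h1 : ∀ e ∈ lam, e ∈ D.B) (h2 : ∀ e ∈ rho, e ∈ D.B) (h3 : ∀ e ∈ tau, e ∈ D.B)
    (h4 : ∀ e ∈ sig, e ∈ D.B)
    (hmu : ∀ e ∈ mu, e ∈ D.B ∧ ∀ κ ∈ D.T i, j e * κ * (j e)⁻¹ ∈ D.T i)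
    (e1 : lam.prod = tau.prod * mu.prod) (e2 : rho.prod = lam.prod⁻¹)
    (e3 : sig.prod = tau.prod⁻¹) (l1 : lam.length ≤ L) (l2 : rho.length ≤ L)
    (l3 : tau.length ≤ L) (l4 : sig.length ≤ L) (l5 : mu.length ≤ L) :
    ∃ κ' ∈ D.T i, Ht K (18 * D.CA * L ^ 2 + L) (cj j lam κ rho) (cj j tau κ' sig) := by
  obtain ⟨κ', hκ', h⟩ := contract j D.B D.hB D.hBi (D.T i) (D.hT i) mu hmu κ hκ
  refine ⟨κ', hκ', ?_⟩
  have a1 := D.hA lam (tau ++ mu) h1 (by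
    intro e he
    rcases List.mem_append.1 he with h | h
    · exact h3 e h
    · exact (hmu e h).1) (by simp [e1])
  have a2 := D.hA rho (mu.reverse.map (·⁻¹) ++ sig) h2 (by
    intro e he
    rcases List.mem_append.1 he with h | h
    · simp only [List.map_reverse, List.mem_reverse, List.mem_map] at h
      obtain ⟨x, hx, rfl⟩ := h
      exact D.hBi _ (hmu x hx).1
    · exact h4 e h) (by
      rw [e2, e1, List.prod_append, e3, prod_map_inv', List.prod_reverse, mul_inv, mul_comm])
  have b1 := (a1.right [κ]).app a2
  have b2 := Ht.ctx _ (tau.map j) (sig.map j) _ _ h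
  have b3 := b1.tr (by simpa [cj] using b2)
  have b4 := b3.cast (m := cj j lam κ rho) (m' := cj j tau κ' sig) (by simp [cj]) (by simp [cj])
  refine b4.le ?_
  simp only [List.length_append, List.length_map, List.length_reverse]
  have c1 : (lam.length + (tau.length + mu.length)) ^ 2 ≤ (3 * L) ^ 2 :=
    Nat.pow_le_pow_left (by omega) 2
  have c2 : (rho.length + (mu.length + sig.length)) ^ 2 ≤ (3 * L) ^ 2 :=
    Nat.pow_le_pow_left (by omega) 2
  have d1 := Nat.mul_le_mul_left D.CA c1
  have d2 := Nat.mul_le_mul_left D.CA c2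
  nlinarith

theorem mem_rep {q : Q} (hq : q ∈ D.B) (l : ℕ) : ∀ e ∈ List.replicate l q, e ∈ D.B := by
  intro e he
  rw [List.eq_of_mem_replicate he]; exact hq

/-- conjugating a piece by a word in `E0`. -/
theorem lem1 (l : ℕ) (i : Fin 3) (lam : List Q) (hl : ∀ e ∈ lam, e ∈ D.E0)
    (hlen : lam.length ≤ l) (κ : G) (hκ : κ ∈ D.T i) :
    ∃ κ' ∈ D.T i, Ht K ((76 * D.CA + 1) * (2 * l) ^ 2)
      (lam.map j ++ W j (D.q i) l κ) (W j (D.q i) (2 * l) κ' ++ lam.map j) := by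
  have hlB : ∀ e ∈ lam, e ∈ D.B := fun e he => D.hE0 (hl e he)
  have hqi := D.hBi _ (D.hq i)
  have hlI : ∀ e ∈ lam.map (·⁻¹), e ∈ D.B := by
    intro e he
    obtain ⟨x, hx, rfl⟩ := List.mem_map.1 he
    exact D.hBi _ (hlB x hx)
  obtain ⟨κ', hκ', h⟩ := move D (2 * l) i (lam ++ List.replicate l (D.q i))
    (List.replicate l (D.q i)⁻¹ ++ lam.map (·⁻¹)) (List.replicate (2 * l) (D.q i))
    (List.replicate (2 * l) (D.q i)⁻¹)
    (lam.map (fun e => e * (D.q i)⁻¹) ++ List.replicate (l - lam.length) (D.q i)⁻¹) κ hκ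
    (by
      intro e he
      rcases List.mem_append.1 he with h | h
      exacts [hlB e h, mem_rep D (D.hq i) _ e h])
    (by
      intro e he
      rcases List.mem_append.1 he with h | h
      exacts [mem_rep D hqi _ e h, hlI e h])
    (mem_rep D (D.hq i) _) (mem_rep D hqi _)
    (by
      intro e he
      rcases List.mem_append.1 he with h | h
      · obtain ⟨x, hx, rfl⟩ := List.mem_map.1 h
        exact D.hc i x (hl x hx)
      · rw [List.eq_of_mem_replicate h]
        exact ⟨hqi, D.hc1 i⟩)
    (by
      obtain ⟨d, hd⟩ := Nat.exists_eq_add_of_le hlen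
      subst hd
      simp only [List.prod_append, List.prod_replicate, List.prod_map_mul, List.map_const',
        List.map_id', Nat.add_sub_cancel_left, inv_pow, pow_add, two_mul]
      have e3 : ∀ x y z : Q, x * (y * z) = y * z * (y * z) * (x * y⁻¹ * z⁻¹) := by
        intro x y z
        rw [mul_assoc x, ← mul_inv, mul_assoc (y * z), mul_left_comm (y * z) x,
          mul_inv_cancel, mul_one, mul_comm]
      exact e3 _ _ _)
    (by
      simp [prod_map_inv', mul_comm])
    (by simp) (by simp; omega) (by simp; omega) (by simp) (by simp) (by simp; omega)
  refine ⟨κ', hκ', ?_⟩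
  have a1 := D.hA (lam.map (·⁻¹) ++ lam) [] (by
      intro e he
      rcases List.mem_append.1 he with h | h
      exacts [hlI e h, hlB e h]) (by simp) (by simp [prod_map_inv'])
  have b1 := (a1.left (lam.map j ++ W j (D.q i) l κ)).sy
  have b2 := h.right (lam.map j)
  have b3 := b1.tr (l'' := W j (D.q i) (2 * l) κ' ++ lam.map j) (by simpa [W, cj] using b2)
  have b4 := b3.cast (m := lam.map j ++ W j (D.q i) l κ) (by simp) rfl
  refine b4.le ?_
  simp only [List.length_append, List.length_map, List.length_nil]
  have c1 : (lam.length + lam.length + 0) ^ 2 ≤ (2 * l) ^ 2 :=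
    Nat.pow_le_pow_left (by omega) 2
  have d1 := Nat.mul_le_mul_left D.CA c1
  have d2 : 2 * l ≤ (2 * l) ^ 2 := Nat.le_self_pow (by norm_num) _
  nlinarith [Nat.zero_le (D.CA * (2 * l) ^ 2)]

theorem lem1' (l : ℕ) (i : Fin 3) (κ : G) (hκ : κ ∈ D.T i) :
    ∃ κ' ∈ D.T i, Ht K ((76 * D.CA + 1) * (2 * l) ^ 2)
      (W j (D.q i) l κ) (W j (D.q i) (2 * l) κ') := by
  simpa using lem1 D l i [] (by simp) (by simp) κ hκ

theorem W_prod (q : Q) (l : ℕ) (κ : G) : (W j q l κ).prod = j (q ^ l) * κ * (j (q ^ l))⁻¹ := by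
  simp [W, cj, mul_assoc]

theorem lem2 (l : ℕ) (i k : Fin 3) (hik : i ≠ k) (κ κ' : G) (hκ : κ ∈ D.T i) (hκ' : κ' ∈ D.T k) :
    Ht K ((80 * D.CA + 5) * (l + 1) ^ 2)
      (W j (D.q i) l κ ++ W j (D.q k) l κ') (W j (D.q k) l κ' ++ W j (D.q i) l κ) := by
  obtain ⟨p, hpB, hi, hk⟩ := D.hp i k hik
  have hpi := D.hBi _ hpB
  have key : ∀ i, ∀ κ ∈ D.T i, (D.q i * p⁻¹ ∈ D.B ∧
      ∀ κ ∈ D.T i, j (D.q i * p⁻¹) * κ * (j (D.q i * p⁻¹))⁻¹ ∈ D.T i) →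
      ∃ κ' ∈ D.T i, Ht K (18 * D.CA * l ^ 2 + l) (W j (D.q i) l κ) (W j p l κ') := by
    intro i κ hκ h
    refine move D l i (List.replicate l (D.q i)) (List.replicate l (D.q i)⁻¹) (List.replicate l p)
      (List.replicate l p⁻¹) (List.replicate l (D.q i * p⁻¹)) κ hκ (mem_rep D (D.hq i) _)
      (mem_rep D (D.hBi _ (D.hq i)) _) (mem_rep D hpB _) (mem_rep D hpi _) ?_ ?_ ?_ ?_ ?_ ?_ ?_ ?_ ?_
    · intro e he
      rw [List.eq_of_mem_replicate he]; exact h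
    all_goals simp [mul_pow]
  obtain ⟨κ1, hκ1, h1⟩ := key i κ hκ hi
  obtain ⟨κ2, hκ2, h2⟩ := key k κ' hκ' hk
  have mid : ∀ i k, ∀ κ ∈ D.T i, ∀ κ' ∈ D.T k, Ht K (D.CA * (2 * l) ^ 2)
      (W j p l κ ++ W j p l κ')
      ((List.replicate l p).map j ++ [κ, κ'] ++ (List.replicate l p⁻¹).map j) := by
    intro i k κ hκ κ' hκ'
    have a := D.hA (List.replicate l p⁻¹ ++ List.replicate l p) [] (by
      intro e he
      rcases List.mem_append.1 he with h | h
      exacts [mem_rep D hpi _ e h, mem_rep D hpB _ e h]) (by simp) (by simp)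
    have b := Ht.ctx _ ((List.replicate l p).map j ++ [κ]) ([κ'] ++ (List.replicate l p⁻¹).map j)
      _ _ a
    have e : (List.replicate l p⁻¹ ++ List.replicate l p).length + ([] : List Q).length = 2 * l := by
      simp; omega
    rw [e] at b
    simpa [W, cj] using b
  have sw : Ht K 1 [κ1, κ2] [κ2, κ1] := by
    apply Ht.base
    · intro x hx
      simp only [List.mem_cons, List.not_mem_nil, or_false] at hx
      rcases hx with rfl | rfl
      exacts [D.hT _ hκ1, D.hT _ hκ2]
    · intro x hx
      simp only [List.mem_cons, List.not_mem_nil, or_false] at hx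
      rcases hx with rfl | rfl
      exacts [D.hT _ hκ2, D.hT _ hκ1]
    · simp
    · simp
    · simpa using D.hcomm i k κ1 hκ1 κ2 hκ2
  have m1 := mid i k κ1 hκ1 κ2 hκ2
  have m2 := mid k i κ2 hκ2 κ1 hκ1
  have s2 := Ht.ctx _ ((List.replicate l p).map j) ((List.replicate l p⁻¹).map j) _ _ sw
  have fin := ((((h1.app h2).tr m1).tr s2).tr m2.sy).tr (h2.app h1).sy
  refine fin.le ?_
  nlinarith [Nat.zero_le (D.CA * l), Nat.zero_le (D.CA * l ^ 2), Nat.zero_le (D.CA)]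

theorem lem3 (l : ℕ) (i : Fin 3) (κ κ' : G) (hκ : κ ∈ D.T i) (hκ' : κ' ∈ D.T i) :
    ∃ κ'' ∈ D.T i, Ht K ((4 * D.CA + 1) * (l + 1) ^ 2)
      (W j (D.q i) l κ ++ W j (D.q i) l κ') (W j (D.q i) (l + 1) κ'') := by
  set p := D.q i with hp
  have hpB : p ∈ D.B := D.hq i
  have hpi := D.hBi _ hpB
  refine ⟨_, D.hcs i κ hκ κ' hκ', ?_⟩
  set κ'' := j p⁻¹ * (κ * κ') * (j p⁻¹)⁻¹ with h''
  have a := D.hA (List.replicate l p⁻¹ ++ List.replicate l p) [] (by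
      intro e he
      rcases List.mem_append.1 he with h | h
      exacts [mem_rep D hpi _ e h, mem_rep D hpB _ e h]) (by simp) (by simp)
  have b := Ht.ctx _ ((List.replicate l p).map j ++ [κ]) ([κ'] ++ (List.replicate l p⁻¹).map j)
      _ _ a
  have e : (List.replicate l p⁻¹ ++ List.replicate l p).length + ([] : List Q).length = 2 * l := by
    simp; omega
  rw [e] at b
  have sw : Ht K 1 [κ, κ'] [j p, κ'', j p⁻¹] := by
    apply Ht.base
    · intro x hx
      simp only [List.mem_cons, List.not_mem_nil, or_false] at hx
      rcases hx with rfl | rfl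
      exacts [D.hT _ hκ, D.hT _ hκ']
    · intro x hx
      simp only [List.mem_cons, List.not_mem_nil, or_false] at hx
      rcases hx with rfl | rfl | rfl
      exacts [D.hB _ hpB, D.hT _ (D.hcs i κ hκ κ' hκ'), D.hB _ hpi]
    · simp
    · simp
    · simp [h'', mul_assoc]
  have s2 := Ht.ctx _ ((List.replicate l p).map j) ((List.replicate l p⁻¹).map j) _ _ sw
  have b' := b.cast (m := W j p l κ ++ W j p l κ')
    (m' := (List.replicate l p).map j ++ [κ, κ'] ++ (List.replicate l p⁻¹).map j)
    (by simp [W, cj]) (by simp)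
  have f := b'.tr s2
  have g : (List.replicate l p).map j ++ [j p, κ'', j p⁻¹] ++ (List.replicate l p⁻¹).map j
      = W j p (l + 1) κ'' := by
    unfold W cj
    rw [List.replicate_succ' (a := p), List.replicate_succ (a := p⁻¹)]
    simp
  rw [g] at f
  refine f.le ?_
  nlinarith [Nat.zero_le (D.CA * l), Nat.zero_le (D.CA)]

/-- The word `l` can be put in the standard form of level `L` with cost `c`. -/
def Form (L c : ℕ) (l : List G) : Prop :=
  ∃ κ : Fin 3 → G, (∀ i, κ i ∈ D.T i) ∧ ∃ lam : List Q, (∀ e ∈ lam, e ∈ D.E0) ∧ lam.length ≤ L ∧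
    Ht K c l (W j (D.q 0) L (κ 0) ++ (W j (D.q 1) L (κ 1) ++ (W j (D.q 2) L (κ 2) ++ lam.map j)))

/-- Constant for the combination step. -/
def cB : ℕ := 10000 * (D.CA + 1)

theorem combine (L c : ℕ) (l l' : List G) (h : Form D L c l) (h' : Form D L c l') :
    Form D (2 * L + 1) (2 * c + cB D * (L + 1) ^ 2) (l ++ l') := by
  obtain ⟨κ, hκ, lam, hl, hlL, H⟩ := h
  obtain ⟨κ', hκ', lam', hl', hlL', H'⟩ := h'
  choose a ha Ha using fun i => lem1' D L i (κ i) (hκ i)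
  choose b hb Hb using fun i => lem1 D L i lam hl hlL (κ' i) (hκ' i)
  choose d hd Hd using fun i => lem3 D (2 * L) i (a i) (b i) (ha i) (hb i)
  refine ⟨d, hd, lam ++ lam', ?_, by simp; omega, ?_⟩
  · intro e he
    rcases List.mem_append.1 he with h | h
    exacts [hl e h, hl' e h]
  set A := fun i => W j (D.q i) (2 * L) (a i) with hA
  set Bw := fun i => W j (D.q i) (2 * L) (b i) with hBw
  set W' := fun i => W j (D.q i) L (κ' i) with hW'
  have s1 := H.app H'
  have t1 := ((Ha 0).app ((Ha 1).app (Ha 2))).right (lam.map j ++ (W' 0 ++ (W' 1 ++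
    (W' 2 ++ lam'.map j))))
  have t2 := ((Hb 0).right (W' 1 ++ (W' 2 ++ lam'.map j))).left (A 0 ++ (A 1 ++ A 2))
  have t3 := ((Hb 1).right (W' 2 ++ lam'.map j)).left (A 0 ++ (A 1 ++ A 2) ++ Bw 0)
  have t4 := ((Hb 2).right (lam'.map j)).left (A 0 ++ (A 1 ++ A 2) ++ Bw 0 ++ Bw 1)
  have t5 := ((lem2 D (2 * L) 2 0 (by decide) _ _ (ha 2) (hb 0)).right
    (Bw 1 ++ (Bw 2 ++ (lam ++ lam').map j))).left (A 0 ++ A 1)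
  have t6 := ((lem2 D (2 * L) 1 0 (by decide) _ _ (ha 1) (hb 0)).right
    (A 2 ++ (Bw 1 ++ (Bw 2 ++ (lam ++ lam').map j)))).left (A 0)
  have t7 := ((lem2 D (2 * L) 2 1 (by decide) _ _ (ha 2) (hb 1)).right
    (Bw 2 ++ (lam ++ lam').map j)).left (A 0 ++ (Bw 0 ++ A 1))
  have t8 := ((Hd 0).app ((Hd 1).app (Hd 2))).right ((lam ++ lam').map j)
  simp only [List.append_assoc, List.map_append] at s1 t1 t2 t3 t4 t5 t6 t7 t8 ⊢
  have fin := s1.tr (t1.tr (t2.tr (t3.tr (t4.tr (t5.tr (t6.tr (t7.tr t8)))))))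
  refine fin.le ?_
  unfold cB
  nlinarith [Nat.zero_le (D.CA * L), Nat.zero_le (D.CA * L ^ 2), Nat.zero_le (D.CA)]

theorem allForm (X : Set G)
    (hX : ∀ l : List G, (∀ x ∈ l, x ∈ X) → l.length ≤ 1 → Form D 1 1 l) (k : ℕ) :
    ∀ l : List G, (∀ x ∈ l, x ∈ X) → l.length ≤ 2 ^ k →
      Form D (2 ^ (k + 1) - 1) ((2 * cB D + 1) * 4 ^ k) l := by
  induction k with
  | zero =>
    intro l hl hlen
    obtain ⟨κ, hκ, lam, h1, h2, h3⟩ := hX l hl (by simpa using hlen)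
    exact ⟨κ, hκ, lam, h1, h2, h3.le (by simp)⟩
  | succ k ih =>
    intro l hl hlen
    have e : l = l.take (2 ^ k) ++ l.drop (2 ^ k) := (List.take_append_drop _ _).symm
    have f1 := ih (l.take (2 ^ k)) (fun x hx => hl x (List.mem_of_mem_take hx)) (by simp)
    have f2 := ih (l.drop (2 ^ k)) (fun x hx => hl x (List.mem_of_mem_drop hx)) (by
      rw [List.length_drop]; rw [pow_succ] at hlen; omega)
    have f := combine D _ _ _ _ f1 f2
    rw [← e] at f
    have hpos : 1 ≤ 2 ^ (k + 1) := Nat.one_le_two_pow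
    have e2 : 2 * (2 ^ (k + 1) - 1) + 1 = 2 ^ (k + 1 + 1) - 1 := by
      rw [pow_succ 2 (k + 1)]; omega
    rw [e2, Nat.sub_add_cancel hpos] at f
    obtain ⟨κ, hκ, lam, h1, h2, h3⟩ := f
    refine ⟨κ, hκ, lam, h1, h2, h3.le ?_⟩
    have e3 : (2 ^ (k + 1)) ^ 2 = 4 * 4 ^ k := by
      rw [← pow_mul, mul_comm, pow_mul]; norm_num [pow_succ]; ring
    rw [e3, pow_succ 4 k]
    nlinarith [Nat.zero_le (cB D * 4 ^ k)]

theorem W_one (l : ℕ) (i : Fin 3) : Ht K (D.CA * (2 * l) ^ 2 + 1) (W j (D.q i) l 1) [] := by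
  have hpB : D.q i ∈ D.B := D.hq i
  have hpi := D.hBi _ hpB
  have b1 : Ht K 1 [1] [] := by
    apply Ht.base
    · intro x hx
      rw [List.mem_singleton] at hx
      rw [hx]; exact D.hT i (D.hT1 i)
    all_goals simp
  have b2 := Ht.ctx _ ((List.replicate l (D.q i)).map j) ((List.replicate l (D.q i)⁻¹).map j) _ _ b1
  have a := D.hA (List.replicate l (D.q i) ++ List.replicate l (D.q i)⁻¹) [] (by
      intro e he
      rcases List.mem_append.1 he with h | h
      exacts [mem_rep D hpB _ e h, mem_rep D hpi _ e h]) (by simp) (by simp)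
  have a' := a.cast (m := (List.replicate l (D.q i)).map j ++ [] ++ (List.replicate l (D.q i)⁻¹).map j)
    (m' := []) (by simp) (by simp)
  refine (b2.tr a').le ?_
  have e : (List.replicate l (D.q i) ++ List.replicate l (D.q i)⁻¹).length +
      ([] : List Q).length = 2 * l := by
    simp; omega
  rw [e]; omega

/-- The quadratic filling theorem. -/
theorem fill (X : Set G)
    (hX : ∀ l : List G, (∀ x ∈ l, x ∈ X) → l.length ≤ 1 → Form D 1 1 l) :
    ∃ C : ℕ, ∀ l : List G, (∀ x ∈ l, x ∈ X) → l.prod = 1 → Ht K (C * l.length ^ 2 + C) l [] := by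
  refine ⟨1000 * (cB D + D.CA + 1), fun l hl hprod => ?_⟩
  obtain ⟨k, hk1, hk2⟩ : ∃ k : ℕ, l.length ≤ 2 ^ k ∧ 2 ^ k ≤ 2 * l.length + 1 := by
    rcases Nat.eq_zero_or_pos l.length with h | h
    · exact ⟨0, by simp [h], by simp⟩
    · refine ⟨Nat.log 2 l.length + 1, (Nat.lt_pow_succ_log_self (by norm_num) _).le, ?_⟩
      have := Nat.pow_log_le_self 2 h.ne'
      rw [pow_succ]; omega
  obtain ⟨κ, hκ, lam, h1, h2, h3⟩ := allForm D X hX k l hl hk1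
  set L := 2 ^ (k + 1) - 1 with hL
  have hp := h3.prod_eq
  rw [hprod] at hp
  have hp' := D.hind (fun i => D.q i ^ L) lam.prod κ hκ (by
    simp only [List.prod_append, W_prod] at hp
    rw [hp, map_list_prod]
    simp only [mul_assoc])
  simp only [hp'.1] at h3
  have a := D.hA lam [] (fun e he => D.hE0 (h1 e he)) (by simp) (by simpa using hp'.2)
  have w := (W_one D L 0).app ((W_one D L 1).app ((W_one D L 2).app a))
  have f := h3.tr w
  refine f.le ?_
  have e4 : 4 ^ k = 2 ^ k * 2 ^ k := by rw [← mul_pow]; norm_num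
  have hL' : L ≤ 2 * 2 ^ k := by rw [hL, pow_succ]; omega
  simp only [List.length_nil, add_zero]
  have g1 : 4 ^ k ≤ 8 * (l.length ^ 2 + 1) := by
    rw [e4]
    have q1 := Nat.mul_le_mul hk2 hk2
    have q2 : l.length ≤ l.length ^ 2 := Nat.le_self_pow (by norm_num) _
    nlinarith
  have g2 : (2 * L) ^ 2 ≤ 16 * 4 ^ k := by
    rw [e4]; nlinarith
  have g3 : lam.length ^ 2 ≤ 4 * 4 ^ k := by
    rw [e4]; nlinarith
  generalize (2 * L) ^ 2 = u at *
  generalize lam.length ^ 2 = v at *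
  generalize 4 ^ k = z at *
  have k1 : D.CA * u ≤ D.CA * (128 * (l.length ^ 2 + 1)) := Nat.mul_le_mul_left _ (by omega)
  have k2 : D.CA * v ≤ D.CA * (32 * (l.length ^ 2 + 1)) := Nat.mul_le_mul_left _ (by omega)
  have k3 : (2 * cB D + 1) * z ≤ (2 * cB D + 1) * (8 * (l.length ^ 2 + 1)) :=
    Nat.mul_le_mul_left _ (by omega)
  nlinarith [Nat.zero_le (D.CA * l.length ^ 2), Nat.zero_le (cB D * l.length ^ 2)]

end Main
end Quad
namespace Quad

/-- The free abelian group of rank three, written multiplicatively. -/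
@[ext] structure Q3 where
  a : ℤ
  b : ℤ
  c : ℤ

namespace Q3
instance : Mul Q3 := ⟨fun x y => ⟨x.a + y.a, x.b + y.b, x.c + y.c⟩⟩
instance : One Q3 := ⟨⟨0, 0, 0⟩⟩
instance : Inv Q3 := ⟨fun x => ⟨-x.a, -x.b, -x.c⟩⟩
@[simp] theorem mul_a (x y : Q3) : (x * y).a = x.a + y.a := rfl
@[simp] theorem mul_b (x y : Q3) : (x * y).b = x.b + y.b := rfl
@[simp] theorem mul_c (x y : Q3) : (x * y).c = x.c + y.c := rfl
@[simp] theorem one_a : (1 : Q3).a = 0 := rfl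
@[simp] theorem one_b : (1 : Q3).b = 0 := rfl
@[simp] theorem one_c : (1 : Q3).c = 0 := rfl
@[simp] theorem inv_a (x : Q3) : (x⁻¹).a = -x.a := rfl
@[simp] theorem inv_b (x : Q3) : (x⁻¹).b = -x.b := rfl
@[simp] theorem inv_c (x : Q3) : (x⁻¹).c = -x.c := rfl

instance : CommGroup Q3 where
  mul_assoc x y z := by ext <;> simp [add_assoc]
  one_mul x := by ext <;> simp
  mul_one x := by ext <;> simp
  inv_mul_cancel x := by ext <;> simp
  mul_comm x y := by ext <;> simp [add_comm]

@[simp] theorem pow_a (x : Q3) (n : ℕ) : (x ^ n).a = n * x.a := by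
  induction n with
  | zero => simp
  | succ n ih => rw [pow_succ, mul_a, ih]; push_cast; ring
@[simp] theorem pow_b (x : Q3) (n : ℕ) : (x ^ n).b = n * x.b := by
  induction n with
  | zero => simp
  | succ n ih => rw [pow_succ, mul_b, ih]; push_cast; ring
@[simp] theorem pow_c (x : Q3) (n : ℕ) : (x ^ n).c = n * x.c := by
  induction n with
  | zero => simp
  | succ n ih => rw [pow_succ, mul_c, ih]; push_cast; ring

/-- the three generators -/
def s : Q3 := ⟨1, 0, 0⟩
def t : Q3 := ⟨0, 1, 0⟩
def u : Q3 := ⟨0, 0, 1⟩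

/-- A finite set of letters. -/
def box : Set Q3 := {e | |e.a| ≤ 8 ∧ |e.b| ≤ 8 ∧ |e.c| ≤ 8}

def basics : Set Q3 := {e | e = s ∨ e = s⁻¹ ∨ e = t ∨ e = t⁻¹ ∨ e = u ∨ e = u⁻¹}

theorem box_inv (e : Q3) (h : e ∈ box) : e⁻¹ ∈ box := by
  simpa [box] using h

theorem basics_box : basics ⊆ box := by
  rintro e (rfl | rfl | rfl | rfl | rfl | rfl) <;> simp [box, s, t, u]

theorem box_finite : box.Finite := by
  have : box ⊆ (fun p : ℤ × ℤ × ℤ => (⟨p.1, p.2.1, p.2.2⟩ : Q3)) ''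
      (Set.Icc (-8) 8 ×ˢ (Set.Icc (-8) 8 ×ˢ Set.Icc (-8) 8)) := by
    rintro ⟨a, b, c⟩ ⟨h1, h2, h3⟩
    exact ⟨(a, b, c), ⟨abs_le.1 h1, abs_le.1 h2, abs_le.1 h3⟩, rfl⟩
  exact Set.Finite.subset (Set.Finite.image _
    ((Set.finite_Icc _ _).prod ((Set.finite_Icc _ _).prod (Set.finite_Icc _ _)))) this

/-- The power word `x^i`. -/
def P (x : Q3) (i : ℤ) : List Q3 := List.replicate i.toNat x ++ List.replicate (-i).toNat x⁻¹

theorem P_neg (x : Q3) (i : ℤ) : P x⁻¹ (-i) = P x i := by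
  unfold P
  rcases le_total 0 i with h | h
  · have : (-i).toNat = 0 := by omega
    simp [this]
  · have : i.toNat = 0 := by omega
    simp [this]

theorem P_length (x : Q3) (i : ℤ) : (P x i).length = i.natAbs := by
  simp only [P, List.length_append, List.length_replicate]; omega

theorem P_prod (x : Q3) (i : ℤ) : (P x i).prod = x ^ i := by
  unfold P
  rcases le_total 0 i with h | h
  · have : (-i).toNat = 0 := by omega
    lift i to ℕ using h
    simp
  · obtain ⟨k, rfl⟩ : ∃ k : ℕ, i = -k := ⟨(-i).toNat, by omega⟩
    simp

theorem P_mem (x : Q3) (i : ℤ) (y : Q3) (h : y ∈ P x i) : y = x ∨ y = x⁻¹ := by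
  rcases List.mem_append.1 h with h | h
  · exact Or.inl (List.eq_of_mem_replicate h)
  · exact Or.inr (List.eq_of_mem_replicate h)

/-- normal form of an element -/
def NF (e : Q3) : List Q3 := P s e.a ++ (P t e.b ++ P u e.c)

theorem zpow_abc (x : Q3) (n : ℤ) : (x ^ n) = ⟨n * x.a, n * x.b, n * x.c⟩ := by
  obtain ⟨k, rfl | rfl⟩ := n.eq_nat_or_neg
  · ext <;> simp
  · ext <;> simp

theorem NF_prod (e : Q3) : (NF e).prod = e := by
  simp only [NF, List.prod_append, P_prod, zpow_abc, s, t, u]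
  ext <;> simp

theorem NF_length (e : Q3) : (NF e).length = e.a.natAbs + e.b.natAbs + e.c.natAbs := by
  simp [NF, P_length]; omega

theorem NF_mem (e : Q3) : ∀ y ∈ NF e, y ∈ basics := by
  intro y hy
  rcases List.mem_append.1 hy with h | h
  · rcases P_mem _ _ _ h with rfl | rfl <;> simp [basics]
  rcases List.mem_append.1 h with h | h
  · rcases P_mem _ _ _ h with rfl | rfl <;> simp [basics]
  · rcases P_mem _ _ _ h with rfl | rfl <;> simp [basics]

section
variable {G : Type*} [Group G] {K : Set G} (j : Q3 →* G)

theorem hbase (hK : ∀ e ∈ box, j e ∈ K) (l l' : List Q3) (h : ∀ x ∈ l, x ∈ box) (h' : ∀ x ∈ l', x ∈ box)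
    (hl : l.length ≤ 30) (hl' : l'.length ≤ 30) (hp : l.prod = l'.prod) :
    Ht K 1 (l.map j) (l'.map j) := by
  apply Ht.base
  · intro x hx
    obtain ⟨y, hy, rfl⟩ := List.mem_map.1 hx
    exact hK y (h y hy)
  · intro x hx
    obtain ⟨y, hy, rfl⟩ := List.mem_map.1 hx
    exact hK y (h' y hy)
  · simpa using hl
  · simpa using hl'
  · rw [← map_list_prod, ← map_list_prod, hp]

theorem swap_rep (hK : ∀ e ∈ box, j e ∈ K) (x y : Q3) (hx : x ∈ box) (hy : y ∈ box) (k : ℕ) :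
    Ht K k ((List.replicate k x ++ [y]).map j) (([y] ++ List.replicate k x).map j) := by
  induction k with
  | zero => simpa using Ht.refl _
  | succ k ih =>
    have h1 := ih.left [j x]
    have h2 := (hbase j hK [x, y] [y, x] (by simp [hx, hy]) (by simp [hx, hy]) (by simp) (by simp)
      (by simp [mul_comm])).right ((List.replicate k x).map j)
    have h3 := (h1.cast rfl (by simp)).tr h2
    exact h3.cast (by simp [List.replicate_succ]) (by simp [List.replicate_succ])

theorem swap_P (hK : ∀ e ∈ box, j e ∈ K) (x y : Q3) (hx : x ∈ box) (hy : y ∈ box) (i : ℤ) :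
    Ht K i.natAbs ((P x i ++ [y]).map j) (([y] ++ P x i).map j) := by
  unfold P
  rcases le_total 0 i with h | h
  · have e : (-i).toNat = 0 := by omega
    have e' : i.natAbs = i.toNat := by omega
    have := swap_rep j hK x y hx hy i.toNat
    rw [e, e']
    simpa using this
  · have e : i.toNat = 0 := by omega
    have e' : i.natAbs = (-i).toNat := by omega
    have := swap_rep j hK x⁻¹ y (box_inv x hx) hy (-i).toNat
    rw [e, e']
    simpa using this

theorem P_succ (hK : ∀ e ∈ box, j e ∈ K) (x : Q3) (hx : x ∈ box) (i : ℤ) :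
    Ht K 1 ((P x i ++ [x]).map j) ((P x (i + 1)).map j) := by
  unfold P
  rcases le_or_gt 0 i with h | h
  · have e : (-i).toNat = 0 := by omega
    have e1 : (-(i + 1)).toNat = 0 := by omega
    have e2 : (i + 1).toNat = i.toNat + 1 := by omega
    rw [e, e1, e2, List.replicate_succ']
    simpa using (Ht.refl _).le (Nat.zero_le 1)
  · have e : i.toNat = 0 := by omega
    have e1 : (i + 1).toNat = 0 := by omega
    have e2 : (-i).toNat = (-(i + 1)).toNat + 1 := by omega
    rw [e, e1, e2, List.replicate_succ']
    have := (hbase j hK [x⁻¹, x] [] (by simp [hx, box_inv x hx]) (by simp) (by simp) (by simp)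
      (by simp)).left ((List.replicate (-(i + 1)).toNat x⁻¹).map j)
    simpa using this

theorem P_pred (hK : ∀ e ∈ box, j e ∈ K) (x : Q3) (hx : x ∈ box) (i : ℤ) :
    Ht K 1 ((P x i ++ [x⁻¹]).map j) ((P x (i - 1)).map j) := by
  have := P_succ j hK x⁻¹ (box_inv x hx) (-i)
  rw [show -i + 1 = -(i - 1) by ring, P_neg, P_neg] at this
  exact this

theorem NF_step (hK : ∀ e ∈ box, j e ∈ K) (e y : Q3) (hy : y ∈ basics) :
    Ht K ((NF e).length + 1) ((NF e ++ [y]).map j) ((NF (e * y)).map j) := by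
  have hyb := basics_box hy
  have hs : s ∈ box := basics_box (by simp [basics])
  have ht : t ∈ box := basics_box (by simp [basics])
  have hu : u ∈ box := basics_box (by simp [basics])
  have key1 : ∀ i, Ht K 1 ((P u e.c ++ [y]).map j) ((P u i).map j) →
      Ht K ((NF e).length + 1) ((NF e ++ [y]).map j) ((NF ⟨e.a, e.b, i⟩).map j) := by
    intro i h
    have := ((h.left ((P t e.b).map j)).left ((P s e.a).map j)).le
      (k' := (NF e).length + 1) (by omega)
    exact this.cast (by simp [NF]) (by simp [NF])
  have key2 : ∀ i, Ht K 1 ((P t e.b ++ [y]).map j) ((P t i).map j) →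
      Ht K ((NF e).length + 1) ((NF e ++ [y]).map j) ((NF ⟨e.a, i, e.c⟩).map j) := by
    intro i h
    have h1 := ((swap_P j hK u y hu hyb e.c).left ((P t e.b).map j)).left ((P s e.a).map j)
    have h2 := (h.right ((P u e.c).map j)).left ((P s e.a).map j)
    have := (h1.tr (h2.cast (by simp) rfl)).le (k' := (NF e).length + 1)
      (by rw [NF_length]; omega)
    exact this.cast (by simp [NF]) (by simp [NF])
  have key3 : ∀ i, Ht K 1 ((P s e.a ++ [y]).map j) ((P s i).map j) →
      Ht K ((NF e).length + 1) ((NF e ++ [y]).map j) ((NF ⟨i, e.b, e.c⟩).map j) := by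
    intro i h
    have h1 := ((swap_P j hK u y hu hyb e.c).left ((P t e.b).map j)).left ((P s e.a).map j)
    have h3 := ((swap_P j hK t y ht hyb e.b).right ((P u e.c).map j)).left ((P s e.a).map j)
    have h2 := h.right ((P t e.b ++ P u e.c).map j)
    have := (h1.tr ((h3.cast (by simp) rfl).tr (h2.cast (by simp) rfl))).le
      (k' := (NF e).length + 1) (by rw [NF_length]; omega)
    exact this.cast (by simp [NF]) (by simp [NF])
  rcases hy with rfl | rfl | rfl | rfl | rfl | rfl
  · exact (key3 _ (P_succ j hK s hs _)).cast rfl (by congr 2; ext <;> simp [s])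
  · exact (key3 _ (P_pred j hK s hs _)).cast rfl (by congr 2; ext <;> simp [s, sub_eq_add_neg])
  · exact (key2 _ (P_succ j hK t ht _)).cast rfl (by congr 2; ext <;> simp [t])
  · exact (key2 _ (P_pred j hK t ht _)).cast rfl (by congr 2; ext <;> simp [t, sub_eq_add_neg])
  · exact (key1 _ (P_succ j hK u hu _)).cast rfl (by congr 2; ext <;> simp [u])
  · exact (key1 _ (P_pred j hK u hu _)).cast rfl (by congr 2; ext <;> simp [u, sub_eq_add_neg])

theorem NF_prod_length (l : List Q3) (hl : ∀ x ∈ l, x ∈ basics) :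
    (NF l.prod).length ≤ l.length := by
  induction l with
  | nil => simp [NF_length]
  | cons x l ih =>
    have h1 := ih (fun y hy => hl y (List.mem_cons_of_mem _ hy))
    have h2 := hl x List.mem_cons_self
    rw [NF_length] at h1 ⊢
    simp only [List.prod_cons, mul_a, mul_b, mul_c, List.length_cons]
    rcases h2 with rfl | rfl | rfl | rfl | rfl | rfl <;> simp [s, t, u] <;> omega

theorem to_NF (hK : ∀ e ∈ box, j e ∈ K) (l : List Q3) (hl : ∀ x ∈ l, x ∈ basics) :
    Ht K (l.length ^ 2) (l.map j) ((NF l.prod).map j) := by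
  induction l using List.reverseRecOn with
  | nil => simpa [NF, P] using Ht.refl _
  | append_singleton l y ih =>
    have hl' : ∀ x ∈ l, x ∈ basics := fun x hx => hl x (by simp [hx])
    have h1 := (ih hl').right [j y]
    have h2 := NF_step j hK l.prod y (hl y (by simp))
    have h3 := (h1.tr (h2.cast (by simp) rfl)).le (k' := (l ++ [y]).length ^ 2) (by
      have := NF_prod_length l hl'
      simp only [List.length_append, List.length_singleton]
      nlinarith)
    exact h3.cast (by simp) (by simp)

theorem to_basics (hK : ∀ e ∈ box, j e ∈ K) (l : List Q3) (hl : ∀ x ∈ l, x ∈ box) : ∃ l' : List Q3,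
    (∀ x ∈ l', x ∈ basics) ∧ l'.length ≤ 24 * l.length ∧ l'.prod = l.prod ∧
    Ht K l.length (l.map j) (l'.map j) := by
  induction l with
  | nil => exact ⟨[], by simp, by simp, rfl, Ht.refl _⟩
  | cons x l ih =>
    obtain ⟨l', h1, h2, h3, h4⟩ := ih (fun y hy => hl y (List.mem_cons_of_mem _ hy))
    have hx := hl x List.mem_cons_self
    have hlen : (NF x).length ≤ 24 := by
      obtain ⟨a1, a2, a3⟩ := hx
      rw [abs_le] at a1 a2 a3
      rw [NF_length]; omega
    refine ⟨NF x ++ l', ?_, ?_, ?_, ?_⟩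
    · intro y hy
      rcases List.mem_append.1 hy with h | h
      exacts [NF_mem x y h, h1 y h]
    · simp only [List.length_append, List.length_cons]; omega
    · simp [NF_prod, h3]
    · have b := hbase j hK [x] (NF x) (by simpa using hx)
        (fun y hy => basics_box (NF_mem x y hy)) (by simp) (by omega) (by simp [NF_prod])
      have := (b.app h4).le (k' := (x :: l).length) (by simp; omega)
      exact this.cast (by simp) (by simp)

theorem lemA (hK : ∀ e ∈ box, j e ∈ K) (l l' : List Q3) (hl : ∀ e ∈ l, e ∈ box) (hl' : ∀ e ∈ l', e ∈ box)
    (h : l.prod = l'.prod) :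
    Ht K (577 * (l.length + l'.length) ^ 2) (l.map j) (l'.map j) := by
  obtain ⟨m, h1, h2, h3, h4⟩ := to_basics j hK l hl
  obtain ⟨m', h1', h2', h3', h4'⟩ := to_basics j hK l' hl'
  have a := h4.tr (to_NF j hK m h1)
  have a' := h4'.tr (to_NF j hK m' h1')
  rw [h3] at a
  rw [h3', ← h] at a'
  refine (a.tr a'.sy).le ?_
  have b := Nat.pow_le_pow_left h2 2
  have b' := Nat.pow_le_pow_left h2' 2
  have c : l.length ≤ l.length ^ 2 := Nat.le_self_pow (by norm_num) _
  have c' : l'.length ≤ l'.length ^ 2 := Nat.le_self_pow (by norm_num) _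
  nlinarith [Nat.zero_le (l.length * l'.length)]

end
end Q3
end Quad
namespace Quad
section Transfer
open DehnCT

section Ar
variable {F : Type*} [Group F]

/-- `w` is a product of at most `k` conjugates of elements of `R ∪ R⁻¹`. -/
def Ar (R : Set F) (k : ℕ) (w : F) : Prop :=
  ∃ L : List (F × F), L.length ≤ k ∧ (∀ p ∈ L, p.2 ∈ R ∨ p.2⁻¹ ∈ R) ∧
    w = (L.map fun p => p.1 * p.2 * p.1⁻¹).prod

variable {R : Set F}

theorem Ar.one : Ar R 0 1 := ⟨[], by simp⟩

theorem Ar.mono {k k' : ℕ} {w : F} (h : Ar R k w) (hk : k ≤ k') : Ar R k' w := by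
  obtain ⟨L, h1, h2⟩ := h
  exact ⟨L, h1.trans hk, h2⟩

theorem Ar.mul {k k' : ℕ} {w w' : F} (h : Ar R k w) (h' : Ar R k' w') :
    Ar R (k + k') (w * w') := by
  obtain ⟨L, h1, h2, h3⟩ := h
  obtain ⟨L', h1', h2', h3'⟩ := h'
  refine ⟨L ++ L', by simp; omega, ?_, by simp [h3, h3']⟩
  intro p hp
  rcases List.mem_append.1 hp with h | h
  exacts [h2 p h, h2' p h]

theorem Ar.conj {k : ℕ} {w : F} (h : Ar R k w) (u : F) : Ar R k (u * w * u⁻¹) := by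
  obtain ⟨L, h1, h2, h3⟩ := h
  subst h3
  refine ⟨L.map (fun p => (u * p.1, p.2)), by simpa using h1, ?_, ?_⟩
  · intro p hp
    obtain ⟨p', hp', rfl⟩ := List.mem_map.1 hp
    exact h2 p' hp'
  · clear h1 h2
    induction L with
    | nil => simp
    | cons p L ih =>
      simp only [List.map_cons, List.prod_cons] at ih ⊢
      rw [← ih]; group

theorem Ar.inv {k : ℕ} {w : F} (h : Ar R k w) : Ar R k w⁻¹ := by
  obtain ⟨L, h1, h2, h3⟩ := h
  subst h3
  refine ⟨(L.map (fun p => (p.1, p.2⁻¹))).reverse, by simpa using h1, ?_, ?_⟩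
  · intro p hp
    obtain ⟨p', hp', rfl⟩ := List.mem_map.1 (List.mem_reverse.1 hp)
    simpa using (h2 p' hp').symm
  · rw [List.prod_inv_reverse, List.map_reverse]
    simp only [List.map_map]
    congr 3
    ext p
    simp [mul_assoc]

theorem Ar.of_mem {w : F} (h : w ∈ R) : Ar R 1 w :=
  ⟨[(1, w)], by simp, by simp [h], by simp⟩

end Ar

variable {G H : Type*} [Group G] [Group H]

/-- The word in `F` traced by the image under `φ` of the path labelled `l` starting at `g`. -/
def psi {F : Type*} [Group F] (φ : G → H) (σ : H → F) : G → List G → F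
  | _, [] => 1
  | g, k :: l => σ ((φ g)⁻¹ * φ (g * k)) * psi φ σ (g * k) l

variable {F : Type*} [Group F] (φ : G → H) (σ : H → F)

theorem psi_append (g : G) (l l' : List G) :
    psi φ σ g (l ++ l') = psi φ σ g l * psi φ σ (g * l.prod) l' := by
  induction l generalizing g with
  | nil => simp [psi]
  | cons k l ih => simp [psi, ih, mul_assoc]

theorem psi_pi (p : F →* H) (hσ : ∀ h, p (σ h) = h) (g : G) (l : List G) :
    p (psi φ σ g l) = (φ g)⁻¹ * φ (g * l.prod) := by
  induction l generalizing g with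
  | nil => simp [psi]
  | cons k l ih => simp [psi, ih, hσ, mul_assoc]

theorem psi_list (K : Set G) (Φ : Set H) (hΦ : ∀ g, ∀ k ∈ K, (φ g)⁻¹ * φ (g * k) ∈ Φ)
    (l : List G) (hl : ∀ x ∈ l, x ∈ K) (g : G) :
    ∃ L : List H, (∀ x ∈ L, x ∈ Φ) ∧ L.length = l.length ∧ psi φ σ g l = (L.map σ).prod := by
  induction l generalizing g with
  | nil => exact ⟨[], by simp, by simp, by simp [psi]⟩
  | cons k l ih =>
    obtain ⟨L, h1, h2, h3⟩ := ih (fun x hx => hl x (List.mem_cons_of_mem _ hx)) (g * k)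
    refine ⟨((φ g)⁻¹ * φ (g * k)) :: L, ?_, by simp [h2], by simp [psi, h3]⟩
    intro x hx
    rcases List.mem_cons.1 hx with rfl | h
    exacts [hΦ _ _ (hl _ List.mem_cons_self), h1 x h]

theorem psi_Ht (K : Set G) (R : Set F)
    (hR : ∀ g, ∀ l l' : List G, (∀ x ∈ l, x ∈ K) → (∀ x ∈ l', x ∈ K) → l.length ≤ 30 →
      l'.length ≤ 30 → l.prod = l'.prod → psi φ σ g l * (psi φ σ g l')⁻¹ ∈ R)
    (k : ℕ) (l l' : List G) (h : Ht K k l l') (g : G) :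
    Ar R k (psi φ σ g l * (psi φ σ g l')⁻¹) := by
  induction h generalizing g with
  | base l l' h1 h2 h3 h4 h5 => exact Ar.of_mem (hR g l l' h1 h2 h3 h4 h5)
  | refl l => simpa using Ar.one
  | symm k l l' _ ih => simpa using (ih g).inv
  | trans k k' l l' l'' _ _ ih1 ih2 => simpa using (ih1 g).mul (ih2 g)
  | ctx k a b l l' h ih =>
    have := (ih (g * a.prod)).conj (psi φ σ g a)
    simp only [psi_append, List.prod_append, h.prod_eq]
    convert this using 1
    group
  | mono k k' l l' hk _ ih => exact (ih g).mono hk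

theorem pi_surj (S : Set H) (hS : Subgroup.closure S = ⊤) : Function.Surjective (pi S) := by
  rw [← MonoidHom.range_eq_top, ← hS, pi, FreeGroup.range_lift_eq_closure]
  simp

/-- Transfer of the quadratic filling theorem from `G` to `H`. -/
theorem transfer (K : Set G) (ι : H →* G) (hφ : ∀ h, φ (ι h) = h) (Φ : Set H) (hΦf : Φ.Finite)
    (hΦ : ∀ g, ∀ k ∈ K, (φ g)⁻¹ * φ (g * k) ∈ Φ) (S : Set H) (hSf : S.Finite)
    (hS : Subgroup.closure S = ⊤)
    (C : ℕ) (hfill : ∀ l : List G, (∀ x ∈ l, ∃ s ∈ S, x = ι s ∨ x = ι s⁻¹) → l.prod = 1 →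
      Ht K (C * l.length ^ 2 + C) l []) :
    ∃ R : Set (FreeGroup S), R.Finite ∧ (∀ r ∈ R, pi S r = 1) ∧
          ∃ C : ℝ, ∀ w : FreeGroup S, pi S w = 1 →
            ∃ L : List (FreeGroup S × FreeGroup S),
              (L.length : ℝ) ≤ C * (len S w : ℝ) ^ 2 + C ∧
              (∀ p ∈ L, p.2 ∈ R ∨ p.2⁻¹ ∈ R) ∧
              w = (L.map fun p => p.1 * p.2 * p.1⁻¹).prod := by
  choose σ hσ using pi_surj S hS
  let val : S × Bool → H := fun p => cond p.2 p.1.1 (p.1.1)⁻¹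
  have hval : ∀ p : S × Bool, pi S (FreeGroup.mk [p]) = val p := by
    rintro ⟨s, b⟩
    cases b <;> simp [pi, val]
  have : Finite S := hSf.to_subtype
  let R1 : Set (FreeGroup S) := (fun p : List H × List H => (p.1.map σ).prod *
    ((p.2.map σ).prod)⁻¹) '' ({L | L.length ≤ 30 ∧ ∀ x ∈ L, x ∈ Φ} ×ˢ
      {L | L.length ≤ 30 ∧ ∀ x ∈ L, x ∈ Φ})
  let R2 : Set (FreeGroup S) := Set.range (fun p : S × Bool => FreeGroup.mk [p] * (σ (val p))⁻¹)
  let R : Set (FreeGroup S) := (R1 ∪ R2) ∩ {r | pi S r = 1}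
  have hLf : {L : List H | L.length ≤ 30 ∧ ∀ x ∈ L, x ∈ Φ}.Finite := by
    have : Finite Φ := hΦf.to_subtype
    refine ((List.finite_length_le Φ 30).image (List.map Subtype.val)).subset ?_
    rintro L ⟨h1, h2⟩
    refine ⟨L.attach.map (fun x => ⟨x.1, h2 x.1 x.2⟩), by simpa using h1, ?_⟩
    simp [List.map_map, Function.comp_def]
  have hRf : R.Finite := by
    apply Set.Finite.inter_of_left
    exact (Set.Finite.image _ (hLf.prod hLf)).union (Set.finite_range _)
  refine ⟨R, hRf, fun r hr => hr.2, ((C + 1 : ℕ) : ℝ), fun w hw => ?_⟩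
  have hR : ∀ g, ∀ l l' : List G, (∀ x ∈ l, x ∈ K) → (∀ x ∈ l', x ∈ K) → l.length ≤ 30 →
      l'.length ≤ 30 → l.prod = l'.prod → psi φ σ g l * (psi φ σ g l')⁻¹ ∈ R := by
    intro g l l' h1 h2 h3 h4 h5
    obtain ⟨L, a1, a2, a3⟩ := psi_list φ σ K Φ hΦ l h1 g
    obtain ⟨L', b1, b2, b3⟩ := psi_list φ σ K Φ hΦ l' h2 g
    refine ⟨Or.inl ⟨(L, L'), ⟨⟨by simp only; omega, a1⟩, ⟨by simp only; omega, b1⟩⟩, ?_⟩, ?_⟩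
    · simp [a3, b3]
    · simp [psi_pi φ σ (pi S) hσ, h5]
  have key : ∀ M : List (S × Bool), ∀ h : H,
      Ar R M.length (FreeGroup.mk M * (psi φ σ (ι h) (M.map (fun p => ι (val p))))⁻¹) := by
    intro M
    induction M with
    | nil => intro h; simpa [psi, ← FreeGroup.one_eq_mk] using Ar.one
    | cons p M ih =>
      intro h
      have h1 := (ih (h * val p)).conj (FreeGroup.mk [p])
      have h2 : Ar R 1 (FreeGroup.mk [p] * (σ (val p))⁻¹) := by
        apply Ar.of_mem
        refine ⟨Or.inr ⟨p, rfl⟩, ?_⟩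
        simp [hσ, hval]
      have h3 := (h1.mul h2).mono (k' := (p :: M).length) (by simp)
      have e : (FreeGroup.mk (p :: M)) = FreeGroup.mk [p] * FreeGroup.mk M := by
        rw [FreeGroup.mul_mk]; rfl
      convert h3 using 1
      rw [e]
      simp only [List.map_cons, psi, ← map_mul, hφ, inv_mul_cancel_left]
      group
  letI := Classical.decEq S
  have hwm : FreeGroup.mk w.toWord = w := FreeGroup.mk_toWord
  have k1 := key w.toWord 1
  have hprod : (w.toWord.map (fun p => ι (val p))).prod = 1 := by
    have : ∀ M : List (S × Bool), (M.map (fun p => ι (val p))).prod = ι (pi S (FreeGroup.mk M)) := by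
      intro M
      induction M with
      | nil => simp [← FreeGroup.one_eq_mk]
      | cons p M ih =>
        have e : (FreeGroup.mk (p :: M)) = FreeGroup.mk [p] * FreeGroup.mk M := by
          rw [FreeGroup.mul_mk]; rfl
        rw [e, List.map_cons, List.prod_cons, ih, map_mul, hval, map_mul]
    rw [this, hwm, hw, map_one]
  have f := hfill (w.toWord.map (fun p => ι (val p))) (by
    intro x hx
    obtain ⟨⟨s, b⟩, _, rfl⟩ := List.mem_map.1 hx
    refine ⟨s, s.2, ?_⟩
    cases b <;> simp [val]) hprod
  have k2 := psi_Ht φ σ K R hR _ _ _ f (ι 1)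
  have k3 := k1.mul k2
  rw [hwm] at k3
  simp only [psi, inv_one, mul_one, inv_mul_cancel_right, List.length_map] at k3
  obtain ⟨L, h1, h2, h3⟩ := k3
  refine ⟨L, ?_, h2, h3⟩
  have hlen : len S w = w.toWord.length := rfl
  rw [hlen]
  have : L.length ≤ (C + 1) * w.toWord.length ^ 2 + (C + 1) := by
    have : w.toWord.length ≤ w.toWord.length ^ 2 := Nat.le_self_pow (by norm_num) _
    nlinarith
  exact_mod_cast this

end Transfer
end Quad
namespace Quad

/-- The ring `ℤ[1/M]`. -/
def Z1 (M : ℤ) : Subring ℚ where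
  carrier := {x | ∃ k : ℕ, ∃ z : ℤ, x * (M : ℚ) ^ k = z}
  mul_mem' := by
    rintro x y ⟨k, z, h⟩ ⟨k', z', h'⟩
    refine ⟨k + k', z * z', ?_⟩
    push_cast
    rw [← h, ← h']; ring
  one_mem' := ⟨0, 1, by simp⟩
  add_mem' := by
    rintro x y ⟨k, z, h⟩ ⟨k', z', h'⟩
    refine ⟨k + k', z * M ^ k' + z' * M ^ k, ?_⟩
    push_cast
    rw [← h, ← h']; ring
  zero_mem' := ⟨0, 0, by simp⟩
  neg_mem' := by
    rintro x ⟨k, z, h⟩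
    refine ⟨k, -z, ?_⟩
    push_cast
    rw [← h]; ring

theorem mem_Z1 {M : ℤ} {x : ℚ} : x ∈ Z1 M ↔ ∃ k : ℕ, ∃ z : ℤ, x * (M : ℚ) ^ k = z := Iff.rfl

theorem int_mem (S : Subring ℚ) (z : ℤ) : (z : ℚ) ∈ S := intCast_mem S z

theorem inv_mem_Z1 {M : ℤ} (hM : M ≠ 0) : (M : ℚ)⁻¹ ∈ Z1 M :=
  ⟨1, 1, by
    have : (M : ℚ) ≠ 0 := by exact_mod_cast hM
    simp [this]⟩

theorem zpow_mem' (S : Subring ℚ) {x : ℚ} (h : x ∈ S) (h' : x⁻¹ ∈ S) (i : ℤ) : x ^ i ∈ S := by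
  obtain ⟨k, rfl | rfl⟩ := i.eq_nat_or_neg
  · simpa using pow_mem h k
  · simpa using pow_mem h' k

theorem zpow_mem_nonneg (S : Subring ℚ) {x : ℚ} (h : x ∈ S) (i : ℤ) (hi : 0 ≤ i) : x ^ i ∈ S := by
  lift i to ℕ using hi
  simpa using pow_mem h i

theorem Z1_le_left (M M' : ℤ) : Z1 M ≤ Z1 (M * M') := by
  rintro x ⟨k, z, h⟩
  refine ⟨k, z * M' ^ k, ?_⟩
  push_cast
  rw [← h]; ring

theorem Z1_le_right (M M' : ℤ) : Z1 M' ≤ Z1 (M * M') := by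
  rw [mul_comm]; exact Z1_le_left _ _

theorem Z1_inter {M M' : ℤ} (hM : M ≠ 0) (hc : IsCoprime M M') {x : ℚ} (h : x ∈ Z1 M)
    (h' : x ∈ Z1 M') : ∃ z : ℤ, x = z := by
  obtain ⟨k, z, h⟩ := h
  obtain ⟨k', z', h'⟩ := h'
  have e : z * M' ^ k' = z' * M ^ k := by
    have : (z : ℚ) * M' ^ k' = z' * M ^ k := by rw [← h, ← h']; ring
    exact_mod_cast this
  have d : M ^ k ∣ z := (hc.pow (m := k) (n := k')).dvd_of_dvd_mul_right ⟨z', by rw [e]; ring⟩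
  obtain ⟨y, rfl⟩ := d
  refine ⟨y, ?_⟩
  have : (M : ℚ) ^ k ≠ 0 := by
    have : (M : ℚ) ≠ 0 := by exact_mod_cast hM
    exact pow_ne_zero _ this
  apply mul_right_cancel₀ this
  rw [h]; push_cast; ring

theorem Z1_add {M M' : ℤ} (hM : M ≠ 0) (hM' : M' ≠ 0) (hc : IsCoprime M M') {x : ℚ}
    (h : x ∈ Z1 (M * M')) : ∃ y ∈ Z1 M, ∃ y' ∈ Z1 M', x = y + y' := by
  obtain ⟨k, z, h⟩ := h
  obtain ⟨a, b, e⟩ := hc.pow (m := k) (n := k)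
  have q1 : (M : ℚ) ^ k ≠ 0 := by
    have : (M : ℚ) ≠ 0 := by exact_mod_cast hM
    exact pow_ne_zero _ this
  have q2 : (M' : ℚ) ^ k ≠ 0 := by
    have : (M' : ℚ) ≠ 0 := by exact_mod_cast hM'
    exact pow_ne_zero _ this
  have e' : (a : ℚ) * M ^ k + b * M' ^ k = 1 := by exact_mod_cast e
  refine ⟨z * b / M ^ k, ⟨k, z * b, by push_cast; field_simp⟩, z * a / M' ^ k,
    ⟨k, z * a, by push_cast; field_simp⟩, ?_⟩
  rw [← h]; push_cast
  rw [mul_pow]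
  field_simp
  linear_combination (-x) * e'

/-- Semidirect product `M ⋊ Q`. -/
@[ext] structure Aff (M Q : Type*) where
  v : M
  q : Q

namespace Aff
variable {M Q : Type*} [CommGroup Q] [AddCommGroup M] [DistribMulAction Q M]
instance : Mul (Aff M Q) := ⟨fun x y => ⟨x.v + x.q • y.v, x.q * y.q⟩⟩
instance : One (Aff M Q) := ⟨⟨0, 1⟩⟩
instance : Inv (Aff M Q) := ⟨fun x => ⟨-(x.q⁻¹ • x.v), x.q⁻¹⟩⟩
@[simp] theorem mul_v (x y : Aff M Q) : (x * y).v = x.v + x.q • y.v := rfl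
@[simp] theorem mul_q (x y : Aff M Q) : (x * y).q = x.q * y.q := rfl
@[simp] theorem one_v : (1 : Aff M Q).v = 0 := rfl
@[simp] theorem one_q : (1 : Aff M Q).q = 1 := rfl
@[simp] theorem inv_v (x : Aff M Q) : (x⁻¹).v = -(x.q⁻¹ • x.v) := rfl
@[simp] theorem inv_q (x : Aff M Q) : (x⁻¹).q = x.q⁻¹ := rfl

instance : Group (Aff M Q) where
  mul_assoc x y z := by ext <;> simp [add_assoc, mul_smul, mul_assoc]
  one_mul x := by ext <;> simp
  mul_one x := by ext <;> simp
  inv_mul_cancel x := by ext <;> simp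

/-- The section `Q → M ⋊ Q`. -/
def sec : Q →* Aff M Q where
  toFun q := ⟨0, q⟩
  map_one' := rfl
  map_mul' x y := by ext <;> simp

/-- The projection. -/
def proj : Aff M Q →* Q where
  toFun x := x.q
  map_one' := rfl
  map_mul' x y := rfl

@[simp] theorem sec_v (q : Q) : (sec q : Aff M Q).v = 0 := rfl
@[simp] theorem sec_q (q : Q) : (sec q : Aff M Q).q = q := rfl

theorem metab (x y : commutator (Aff M Q)) : x * y = y * x := by
  have h : ∀ x ∈ commutator (Aff M Q), x.q = 1 := by
    intro x hx
    exact Abelianization.commutator_subset_ker (proj (M := M) (Q := Q)) hx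
  obtain ⟨x, hx⟩ := x
  obtain ⟨y, hy⟩ := y
  apply Subtype.ext
  show x * y = y * x
  ext
  · simp [h x hx, h y hy, add_comm]
  · simp [mul_comm]

theorem conj (e : Q) (v : M) : sec e * ⟨v, 1⟩ * (sec e)⁻¹ = (⟨e • v, 1⟩ : Aff M Q) := by
  ext <;> simp

end Aff

section Arith
variable (n : ℤ)

/-- the integer `2n` -/
def N1 : ℤ := 2 * n
/-- the integer `4n²+1` -/
def M1 : ℤ := 4 * n ^ 2 + 1

theorem N1_ne [h : NeZero n] : N1 n ≠ 0 := by
  have := h.out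
  unfold N1; omega

theorem M1_pos : 0 < M1 n := by unfold M1; positivity
theorem M1_ne : M1 n ≠ 0 := (M1_pos n).ne'

theorem cop : IsCoprime (M1 n) (N1 n) := ⟨1, -(N1 n), by unfold M1 N1; ring⟩

abbrev A : Subring ℚ := Z1 (M1 n * N1 n)

/-- the character of `Q3` -/
def chi (e : Q3) : ℚ := (N1 n : ℚ) ^ e.a * (M1 n : ℚ) ^ e.b * (n : ℚ) ^ e.c

variable [NeZero n]

theorem nq : (n : ℚ) ≠ 0 := by exact_mod_cast NeZero.ne n
theorem Nq : (N1 n : ℚ) ≠ 0 := by exact_mod_cast N1_ne n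
theorem Mq (n : ℤ) : (M1 n : ℚ) ≠ 0 := by exact_mod_cast M1_ne n

theorem chi_one : chi n 1 = 1 := by simp [chi]
theorem chi_mul (x y : Q3) : chi n (x * y) = chi n x * chi n y := by
  simp only [chi, Q3.mul_a, Q3.mul_b, Q3.mul_c, zpow_add₀ (nq n), zpow_add₀ (Nq n),
    zpow_add₀ (Mq n)]
  ring

theorem chi_ne (x : Q3) : chi n x ≠ 0 :=
  mul_ne_zero (mul_ne_zero (zpow_ne_zero _ (Nq n)) (zpow_ne_zero _ (Mq n)))
    (zpow_ne_zero _ (nq n))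

theorem ninv : (n : ℚ)⁻¹ = 2 * (N1 n : ℚ)⁻¹ := by
  have := nq n
  rw [N1]; push_cast; field_simp

theorem chi_O2 (e : Q3) (h : 0 ≤ e.b) : chi n e ∈ Z1 (N1 n) := by
  have h1 := inv_mem_Z1 (N1_ne n)
  refine mul_mem (mul_mem (zpow_mem' _ (int_mem _ _) h1 _)
    (zpow_mem_nonneg _ (int_mem _ _) _ h)) (zpow_mem' _ (int_mem _ _) ?_ _)
  rw [ninv]
  exact mul_mem (by exact_mod_cast int_mem _ 2) h1

theorem chi_O1 (e : Q3) (h : 0 ≤ e.a) (h' : 0 ≤ e.a + e.c) : chi n e ∈ Z1 (M1 n) := by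
  have h1 := inv_mem_Z1 (M1_ne n)
  have : chi n e = 2 ^ e.a * (M1 n : ℚ) ^ e.b * (n : ℚ) ^ (e.a + e.c) := by
    rw [chi, zpow_add₀ (nq n), N1]
    push_cast
    rw [mul_zpow]; ring
  rw [this]
  exact mul_mem (mul_mem (zpow_mem_nonneg _ (by exact_mod_cast int_mem _ 2) _ h)
    (zpow_mem' _ (int_mem _ _) h1 _)) (zpow_mem_nonneg _ (int_mem _ _) _ h')

theorem chi_A (e : Q3) : chi n e ∈ A n := by
  have h1 := Z1_le_left (M1 n) (N1 n) (inv_mem_Z1 (M1_ne n))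
  have h2 := Z1_le_right (M1 n) (N1 n) (inv_mem_Z1 (N1_ne n))
  refine mul_mem (mul_mem (zpow_mem' _ (int_mem _ _) h2 _)
    (zpow_mem' _ (int_mem _ _) h1 _)) (zpow_mem' _ (int_mem _ _) ?_ _)
  rw [ninv]
  exact mul_mem (by exact_mod_cast int_mem _ 2) h2

instance : DistribMulAction Q3 (A n) where
  smul e x := ⟨chi n e * x, mul_mem (chi_A n e) x.2⟩
  one_smul x := by apply Subtype.ext; show chi n 1 * (x : ℚ) = x; rw [chi_one, one_mul]
  mul_smul e f x := by
    apply Subtype.ext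
    show chi n (e * f) * (x : ℚ) = chi n e * (chi n f * x)
    rw [chi_mul, mul_assoc]
  smul_zero e := by apply Subtype.ext; show chi n e * 0 = 0; simp
  smul_add e x y := by
    apply Subtype.ext
    show chi n e * ((x : ℚ) + y) = chi n e * x + chi n e * y
    ring

@[simp] theorem coe_smul (e : Q3) (x : A n) : ((e • x : A n) : ℚ) = chi n e * x := rfl

theorem abs_chi (e : Q3) :
    |chi n e| = (2 * |(n : ℚ)|) ^ e.a * (4 * |(n : ℚ)| ^ 2 + 1) ^ e.b * |(n : ℚ)| ^ e.c := by
  rw [chi, abs_mul, abs_mul, abs_zpow, abs_zpow, abs_zpow]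
  congr 3
  · simp [N1, abs_mul]
  · have : (0 : ℚ) ≤ M1 n := by exact_mod_cast (M1_pos n).le
    rw [abs_of_nonneg this, M1, sq_abs]; push_cast; ring

theorem one_le_abs : 1 ≤ |(n : ℚ)| := by
  have : 1 ≤ |n| := Int.one_le_abs (NeZero.ne n)
  exact_mod_cast this

theorem abs_chi_le (e : Q3) (h1 : e.a ≤ 0) (h2 : e.b ≤ 0) (h3 : e.a + e.c ≤ 0) :
    |chi n e| ≤ 1 := by
  have hy := one_le_abs n
  rw [abs_chi, mul_zpow]
  set y := |(n : ℚ)|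
  have e1 : (2 : ℚ) ^ e.a ≤ 1 := zpow_le_one_of_nonpos₀ (by norm_num) h1
  have e2 : (4 * y ^ 2 + 1) ^ e.b ≤ 1 := zpow_le_one_of_nonpos₀ (by nlinarith) h2
  have e3 : y ^ (e.a + e.c) ≤ 1 := zpow_le_one_of_nonpos₀ hy h3
  rw [zpow_add₀ (by positivity)] at e3
  have p1 : (0 : ℚ) ≤ (2 : ℚ) ^ e.a := by positivity
  have p2 : (0 : ℚ) ≤ (4 * y ^ 2 + 1) ^ e.b := by positivity
  have p3 : (0 : ℚ) ≤ y ^ e.a * y ^ e.c := by positivity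
  calc _ = (2 : ℚ) ^ e.a * (4 * y ^ 2 + 1) ^ e.b * (y ^ e.a * y ^ e.c) := by ring
    _ ≤ 1 * 1 * 1 := by gcongr
    _ = 1 := by ring

theorem abs_chi1 : |chi n ⟨2, -1, 0⟩| ≤ 1 := by
  have hy := one_le_abs n
  rw [abs_chi]
  set y := |(n : ℚ)|
  simp only [zpow_zero, mul_one, zpow_neg, zpow_one]
  rw [← div_eq_mul_inv, div_le_one (by positivity)]
  norm_cast
  nlinarith

theorem abs_chi2 : |chi n ⟨-6, 2, 0⟩| ≤ 1 := by
  have hy := one_le_abs n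
  rw [abs_chi]
  set y := |(n : ℚ)|
  simp only [zpow_zero, mul_one, zpow_neg]
  rw [mul_comm, ← div_eq_mul_inv, div_le_one (by positivity)]
  norm_cast
  have h2 : 1 ≤ y ^ 2 := by nlinarith
  have h4 : y ^ 4 ≤ y ^ 6 := pow_le_pow_right₀ hy (by norm_num)
  have h5 : y ^ 2 ≤ y ^ 4 := pow_le_pow_right₀ hy (by norm_num)
  nlinarith

theorem abs_chi3 : |chi n ⟨-1, -1, 0⟩| ≤ 1 / 2 := by
  have hy := one_le_abs n
  rw [abs_chi]
  set y := |(n : ℚ)|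
  simp only [zpow_zero, mul_one, zpow_neg, zpow_one]
  rw [← mul_inv, ← one_div]
  apply one_div_le_one_div_of_le (by norm_num)
  nlinarith [sq_nonneg y]

/-- existence of the rounding map -/
theorem exists_r (w : Fin 3 → A n) : ∃ r : A n, |((w 0 - r : A n) : ℚ)| ≤ 1 ∧
    ((w 1 - r : A n) : ℚ) ∈ Z1 (M1 n) ∧ ((w 2 - r : A n) : ℚ) ∈ Z1 (N1 n) := by
  obtain ⟨y, hy, y', hy', e⟩ := Z1_add (M1_ne n) (N1_ne n) (cop n) (w 1 - w 2 : A n).2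
  have hyA : y ∈ A n := Z1_le_left _ _ hy
  let r0 : A n := w 1 - ⟨y, hyA⟩
  have e' : ((w 1 : A n) : ℚ) - w 2 = y + y' := by exact_mod_cast e
  let z : ℤ := ⌊((w 0 - r0 : A n) : ℚ)⌋
  refine ⟨r0 + ⟨z, int_mem _ z⟩, ?_, ?_, ?_⟩
  · have h1 := Int.floor_le ((w 0 - r0 : A n) : ℚ)
    have h2 := Int.lt_floor_add_one ((w 0 - r0 : A n) : ℚ)
    have : ((w 0 - (r0 + ⟨z, int_mem _ z⟩) : A n) : ℚ) = ((w 0 - r0 : A n) : ℚ) - z := by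
      push_cast; ring
    rw [this, abs_le]
    constructor <;> linarith
  · have : ((w 1 - (r0 + ⟨z, int_mem _ z⟩) : A n) : ℚ) = y - z := by
      simp [r0]; ring
    rw [this]
    exact sub_mem hy (int_mem _ z)
  · have : ((w 2 - (r0 + ⟨z, int_mem _ z⟩) : A n) : ℚ) = -y' - z := by
      simp [r0]; linarith
    rw [this]
    exact sub_mem (neg_mem hy') (int_mem _ z)

end Arith
end Quad
namespace Quad
section Constr
variable (n : ℤ) [NeZero n]

abbrev HH := Aff (A n) Q3
abbrev GG := Aff (Fin 3 → A n) Q3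

/-- The diagonal embedding. -/
def iota : HH n →* GG n where
  toFun h := ⟨fun _ => h.v, h.q⟩
  map_one' := rfl
  map_mul' x y := by ext <;> simp

/-- The contracted domains. -/
def PP (i : Fin 3) (x : ℚ) : Prop :=
  if i = 0 then |x| ≤ 1 else if i = 1 then x ∈ Z1 (M1 n) else x ∈ Z1 (N1 n)

theorem PP0 (x : ℚ) : PP n 0 x ↔ |x| ≤ 1 := by simp [PP]
theorem PP1 (x : ℚ) : PP n 1 x ↔ x ∈ Z1 (M1 n) := by simp [PP]
theorem PP2 (x : ℚ) : PP n 2 x ↔ x ∈ Z1 (N1 n) := by simp [PP]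

theorem PP_zero (i : Fin 3) : PP n i 0 := by
  fin_cases i
  · exact (PP0 n 0).2 (by simp)
  · exact (PP1 n 0).2 (zero_mem _)
  · exact (PP2 n 0).2 (zero_mem _)

theorem PP_one (i : Fin 3) : PP n i 1 := by
  fin_cases i
  · exact (PP0 n 1).2 (by simp)
  · exact (PP1 n 1).2 (one_mem _)
  · exact (PP2 n 1).2 (one_mem _)

theorem PP_neg (i : Fin 3) (x : ℚ) (h : PP n i x) : PP n i (-x) := by
  unfold PP at *
  split_ifs at * with h1 h2
  · simpa using h
  · exact neg_mem h
  · exact neg_mem h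

def KK : Set (GG n) := {g | (∀ i, PP n i (g.v i)) ∧ g.q ∈ Q3.box}

def TT (i : Fin 3) : Set (GG n) := {g | ∃ x : A n, PP n i x ∧ g = ⟨Pi.single i x, 1⟩}

theorem sec_KK (e : Q3) (he : e ∈ Q3.box) : Aff.sec e ∈ KK n :=
  ⟨fun i => PP_zero n i, he⟩

theorem one_box : (1 : Q3) ∈ Q3.box := by simp [Q3.box]

theorem TT_KK (i : Fin 3) : TT n i ⊆ KK n := by
  rintro _ ⟨x, hx, rfl⟩
  refine ⟨fun k => ?_, one_box⟩
  by_cases h : k = i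
  · subst h; simpa using hx
  · simpa [Pi.single_eq_of_ne h] using PP_zero n k

/-- `e` contracts the `i`-th domain -/
def Good (i : Fin 3) (e : Q3) : Prop := ∀ x, PP n i x → PP n i (chi n e * x)

theorem good0 (e : Q3) (h : |chi n e| ≤ 1) : Good n 0 e := by
  intro x hx
  rw [PP0] at *
  rw [abs_mul]
  exact mul_le_one₀ h (abs_nonneg _) hx

theorem good1 (e : Q3) (h : 0 ≤ e.a) (h' : 0 ≤ e.a + e.c) : Good n 1 e := by
  intro x hx
  rw [PP1] at *
  exact mul_mem (chi_O1 n e h h') hx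

theorem good2 (e : Q3) (h : 0 ≤ e.b) : Good n 2 e := by
  intro x hx
  rw [PP2] at *
  exact mul_mem (chi_O2 n e h) hx

theorem smul_single (i : Fin 3) (e : Q3) (x : A n) :
    e • (Pi.single i x : Fin 3 → A n) = Pi.single i (e • x) := by
  ext k
  by_cases h : k = i
  · subst h; simp
  · simp [Pi.single_eq_of_ne h]

theorem conj_single (i : Fin 3) (e : Q3) (x : A n) :
    Aff.sec e * (⟨Pi.single i x, 1⟩ : GG n) * (Aff.sec e)⁻¹ = ⟨Pi.single i (e • x), 1⟩ := by
  rw [Aff.conj, smul_single]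

theorem Good.TT {i : Fin 3} {e : Q3} (h : Good n i e) :
    ∀ κ ∈ TT n i, Aff.sec e * κ * (Aff.sec e)⁻¹ ∈ TT n i := by
  rintro _ ⟨x, hx, rfl⟩
  exact ⟨e • x, h _ hx, conj_single n i e x⟩

/-- The three contracting elements -/
def qq (i : Fin 3) : Q3 := if i = 0 then Q3.s * Q3.t else if i = 1 then Q3.s⁻¹ else Q3.t⁻¹

theorem qq0 : qq 0 = ⟨1, 1, 0⟩ := rfl
theorem qq1 : qq 1 = ⟨-1, 0, 0⟩ := rfl
theorem qq2 : qq 2 = ⟨0, -1, 0⟩ := rfl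

theorem good_hc (i : Fin 3) (e : Q3) (he : e ∈ Q3.basics ∨ e = 1) : Good n i (e * (qq i)⁻¹) := by
  fin_cases i
  · apply good0
    apply abs_chi_le
    all_goals
      simp only [Fin.zero_eta, qq0]
      rcases he with (rfl | rfl | rfl | rfl | rfl | rfl) | rfl <;> simp [Q3.s, Q3.t, Q3.u]
  · apply good1
    all_goals
      simp only [Fin.mk_one, qq1]
      rcases he with (rfl | rfl | rfl | rfl | rfl | rfl) | rfl <;> simp [Q3.s, Q3.t, Q3.u]
  · apply good2
    simp only [Fin.reduceFinMk, qq2]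
    rcases he with (rfl | rfl | rfl | rfl | rfl | rfl) | rfl <;> simp [Q3.s, Q3.t, Q3.u]

theorem box_hc (i : Fin 3) (e : Q3) (he : e ∈ Q3.basics) : e * (qq i)⁻¹ ∈ Q3.box := by
  fin_cases i
  · simp only [Fin.zero_eta, qq0]
    rcases he with (rfl | rfl | rfl | rfl | rfl | rfl) <;> simp [Q3.s, Q3.t, Q3.u, Q3.box]
  · simp only [Fin.mk_one, qq1]
    rcases he with (rfl | rfl | rfl | rfl | rfl | rfl) <;> simp [Q3.s, Q3.t, Q3.u, Q3.box]
  · simp only [Fin.reduceFinMk, qq2]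
    rcases he with (rfl | rfl | rfl | rfl | rfl | rfl) <;> simp [Q3.s, Q3.t, Q3.u, Q3.box]

theorem qq_box (i : Fin 3) : qq i ∈ Q3.box := by
  fin_cases i
  · simp [qq0, Q3.box]
  · simp [qq1, Q3.box]
  · simp [qq2, Q3.box]

theorem good_sum (i : Fin 3) (x y : ℚ) (hx : PP n i x) (hy : PP n i y) :
    PP n i (chi n (qq i)⁻¹ * (x + y)) := by
  have g := good_hc n i 1 (Or.inr rfl)
  rw [one_mul] at g
  fin_cases i
  · simp only [Fin.zero_eta, PP0] at *
    have h := abs_chi3 n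
    have e : (qq 0)⁻¹ = ⟨-1, -1, 0⟩ := rfl
    rw [e, abs_mul]
    have := abs_add_le x y
    have := abs_nonneg (x + y)
    have := abs_nonneg (chi n ⟨-1, -1, 0⟩)
    nlinarith
  · have h1 := g x hx
    have h2 := g y hy
    simp only [Fin.mk_one, PP1] at *
    rw [mul_add]; exact add_mem h1 h2
  · have h1 := g x hx
    have h2 := g y hy
    simp only [Fin.reduceFinMk, PP2] at *
    rw [mul_add]; exact add_mem h1 h2

/-- the pairing condition -/
def Pair (i k : Fin 3) : Prop := ∃ p ∈ Q3.box, (qq i * p⁻¹ ∈ Q3.box ∧ Good n i (qq i * p⁻¹)) ∧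
  (qq k * p⁻¹ ∈ Q3.box ∧ Good n k (qq k * p⁻¹))

theorem Pair.symm {i k : Fin 3} (h : Pair n i k) : Pair n k i := by
  obtain ⟨p, h1, h2, h3⟩ := h
  exact ⟨p, h1, h3, h2⟩

theorem pair01 : Pair n 0 1 := by
  refine ⟨⟨-1, 2, 0⟩, by simp [Q3.box], ⟨by simp [qq0, Q3.box], ?_⟩,
    ⟨by simp [qq1, Q3.box], ?_⟩⟩
  · exact good0 n _ (abs_chi1 n)
  · apply good1 <;> simp [qq1]

theorem pair02 : Pair n 0 2 := by
  refine ⟨⟨7, -1, 0⟩, by simp [Q3.box], ⟨by simp [qq0, Q3.box], ?_⟩,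
    ⟨by simp [qq2, Q3.box], ?_⟩⟩
  · exact good0 n _ (abs_chi2 n)
  · apply good2; simp [qq2]

theorem pair12 : Pair n 1 2 := by
  refine ⟨⟨-1, -1, 0⟩, by simp [Q3.box], ⟨by simp [qq1, Q3.box], ?_⟩,
    ⟨by simp [qq2, Q3.box], ?_⟩⟩
  · apply good1 <;> simp [qq1]
  · apply good2; simp [qq2]

theorem pair (i k : Fin 3) (h : i ≠ k) : Pair n i k := by
  fin_cases i <;> fin_cases k
  · exact absurd rfl h
  · exact pair01 n
  · exact pair02 n
  · exact (pair01 n).symm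
  · exact absurd rfl h
  · exact pair12 n
  · exact (pair02 n).symm
  · exact (pair12 n).symm
  · exact absurd rfl h

/-- The data for the filling theorem. -/
def DD : Data (KK n) (Aff.sec : Q3 →* GG n) where
  B := Q3.box
  E0 := Q3.basics
  T := TT n
  q := qq
  CA := 577
  hB := sec_KK n
  hBi := Q3.box_inv
  hE0 := Q3.basics_box
  hT := TT_KK n
  hT1 i := ⟨0, PP_zero n i, by ext <;> simp⟩
  hq := qq_box
  hA := Q3.lemA Aff.sec (sec_KK n)
  hc i e he := ⟨box_hc i e he, (good_hc n i e (Or.inl he)).TT⟩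
  hc1 i := by
    have g := good_hc n i 1 (Or.inr rfl)
    rw [one_mul] at g
    exact g.TT
  hcs i := by
    rintro _ ⟨x, hx, rfl⟩ _ ⟨y, hy, rfl⟩
    refine ⟨(qq i)⁻¹ • (x + y), ?_, ?_⟩
    · exact good_sum n i x y hx hy
    · rw [← conj_single]
      congr 2
      ext1
      · simp [Pi.single_add]
      · simp
  hcomm i k := by
    rintro _ ⟨x, hx, rfl⟩ _ ⟨y, hy, rfl⟩
    ext1
    · simp [add_comm]
    · simp
  hp i k h := by
    obtain ⟨p, h1, ⟨h2, h3⟩, h4, h5⟩ := pair n i k h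
    exact ⟨p, h1, ⟨h2, h3.TT⟩, h4, h5.TT⟩
  hind p r κ hκ h := by
    choose x hx e using hκ
    simp only [e, conj_single] at h
    have hv := congrArg Aff.v h
    have hr := congrArg Aff.q h
    refine ⟨?_, by simpa using hr⟩
    have h0 := congrFun hv 0
    have h1 := congrFun hv 1
    have h2 := congrFun hv 2
    simp [smul_eq_zero_iff_eq] at h0 h1 h2
    intro i
    rw [e]
    fin_cases i
    · ext1 <;> simp [h0]
    · ext1 <;> simp [h1]
    · ext1 <;> simp [h2]

/-- The generator of the abelian normal subgroup -/
def ga : HH n := ⟨1, 1⟩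

def SS : Set (HH n) := {ga n, Aff.sec Q3.s, Aff.sec Q3.t, Aff.sec Q3.u}

theorem iota_sec (e : Q3) : iota n (Aff.sec e) = Aff.sec e := rfl

theorem form_sec (e : Q3) (he : e ∈ Q3.basics) : Form (DD n) 1 1 [Aff.sec e] := by
  refine ⟨fun _ => 1, (DD n).hT1, [e], fun y hy => by rw [List.mem_singleton.1 hy]; exact he, by simp, ?_⟩
  apply Ht.base
  · simpa using sec_KK n e (Q3.basics_box he)
  · have h1 : (1 : GG n) ∈ KK n := TT_KK n 0 ((DD n).hT1 0)
    have hq : ∀ i, Aff.sec (qq i) ∈ KK n := fun i => sec_KK n _ (qq_box i)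
    have hq' : ∀ i, (Aff.sec (qq i) : GG n)⁻¹ ∈ KK n := fun i => by
      rw [← map_inv]; exact sec_KK n _ (Q3.box_inv _ (qq_box i))
    have he' := sec_KK n e (Q3.basics_box he)
    simp [W, cj, DD, h1, hq, hq', he']
  · simp
  · simp [W, cj]
  · simp [W, cj]

theorem form_nil : Form (DD n) 1 1 [] := by
  refine ⟨fun _ => 1, (DD n).hT1, [], by simp, by simp, ?_⟩
  apply Ht.base
  · simp
  · have h1 : (1 : GG n) ∈ KK n := TT_KK n 0 ((DD n).hT1 0)
    have hq : ∀ i, Aff.sec (qq i) ∈ KK n := fun i => sec_KK n _ (qq_box i)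
    have hq' : ∀ i, (Aff.sec (qq i) : GG n)⁻¹ ∈ KK n := fun i => by
      rw [← map_inv]; exact sec_KK n _ (Q3.box_inv _ (qq_box i))
    simp [W, cj, DD, h1, hq, hq']
  · simp
  · simp [W, cj]
  · simp [W, cj]

theorem W_prod1 {G Q : Type*} [Group G] [CommGroup Q] (j : Q →* G) (q : Q) (κ : G) :
    (W j q 1 κ).prod = j q * κ * (j q)⁻¹ := by
  simp [W, cj, mul_assoc]

theorem qD : (DD n).q = qq := rfl

theorem form_gen (g : GG n) (hg : g ∈ KK n) (κ : Fin 3 → GG n) (hκ : ∀ i, κ i ∈ TT n i)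
    (h : g = Aff.sec (qq 0) * κ 0 * (Aff.sec (qq 0))⁻¹ * (Aff.sec (qq 1) * κ 1 *
      (Aff.sec (qq 1))⁻¹ * (Aff.sec (qq 2) * κ 2 * (Aff.sec (qq 2))⁻¹))) :
    Form (DD n) 1 1 [g] := by
  refine ⟨κ, hκ, [], by simp, by simp, ?_⟩
  rw [qD]
  apply Ht.base
  · simpa using hg
  · have h1 : ∀ i, κ i ∈ KK n := fun i => TT_KK n i (hκ i)
    have hq : ∀ i, Aff.sec (qq i) ∈ KK n := fun i => sec_KK n _ (qq_box i)
    have hq' : ∀ i, (Aff.sec (qq i) : GG n)⁻¹ ∈ KK n := fun i => by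
      rw [← map_inv]; exact sec_KK n _ (Q3.box_inv _ (qq_box i))
    simp [W, cj, h1, hq, hq']
  · simp
  · simp [W, cj]
  · rw [List.prod_append, List.prod_append, List.prod_append, W_prod1, W_prod1, W_prod1]
    rw [List.prod_singleton, List.map_nil, List.prod_nil, mul_one]
    exact h

theorem form_a (x : A n) (hx : ∀ i, PP n i x) : Form (DD n) 1 1 [iota n ⟨x, 1⟩] := by
  refine form_gen n _ ⟨fun i => hx i, one_box⟩
    (fun i => ⟨Pi.single i ((qq i)⁻¹ • x), 1⟩) (fun i => ?_) ?_
  · have g := good_hc n i 1 (Or.inr rfl)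
    rw [one_mul] at g
    exact ⟨(qq i)⁻¹ • x, g _ (hx i), rfl⟩
  · rw [conj_single, conj_single, conj_single, smul_inv_smul, smul_inv_smul, smul_inv_smul]
    ext1
    · funext i
      fin_cases i <;> simp [iota]
    · simp [iota]

theorem fillG : ∃ C : ℕ, ∀ l : List (GG n), (∀ x ∈ l, ∃ s ∈ SS n, x = iota n s ∨ x = iota n s⁻¹) →
    l.prod = 1 → Ht (KK n) (C * l.length ^ 2 + C) l [] := by
  apply fill (DD n) {x | ∃ s ∈ SS n, x = iota n s ∨ x = iota n s⁻¹}
  intro l hl hlen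
  rcases l with _ | ⟨x, l⟩
  · exact form_nil n
  · have : l = [] := by
      rw [← List.length_eq_zero_iff]; simp at hlen; simpa using hlen
    subst this
    obtain ⟨s, hs, h⟩ := hl x (by simp)
    have key : ∀ e : Q3, e ∈ Q3.basics → e⁻¹ ∈ Q3.basics → s = Aff.sec e → Form (DD n) 1 1 [x] := by
      rintro e h1 h2 rfl
      rcases h with rfl | rfl
      · exact form_sec n e h1
      · rw [← map_inv]; exact form_sec n _ h2
    rcases hs with rfl | rfl | rfl | rfl
    · rcases h with rfl | rfl
      · exact form_a n 1 (fun i => PP_one n i)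
      · have : (ga n)⁻¹ = ⟨-1, 1⟩ := by ext1 <;> simp [ga]
        rw [this]
        exact form_a n (-1) (fun i => by simpa using PP_neg n i 1 (PP_one n i))
    · exact key _ (by simp [Q3.basics]) (by simp [Q3.basics]) rfl
    · exact key _ (by simp [Q3.basics]) (by simp [Q3.basics]) rfl
    · exact key _ (by simp [Q3.basics]) (by simp [Q3.basics]) rfl

end Constr
end Quad
namespace Quad
section Final
variable (n : ℤ) [NeZero n]

/-- `r` is an admissible rounding of `w` -/
def IsR (w : Fin 3 → A n) (r : A n) : Prop := ∀ i, PP n i ((w i : ℚ) - r)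

theorem exists_r' (w : Fin 3 → A n) : ∃ r : A n, IsR n w r ∧
    ∀ x : A n, (w = fun _ => x) → r = x := by
  by_cases h : ∃ x : A n, w = fun _ => x
  · obtain ⟨x, rfl⟩ := h
    refine ⟨x, fun i => by simpa using PP_zero n i, fun y hy => congrFun hy 0⟩
  · obtain ⟨r, h0, h1, h2⟩ := exists_r n w
    refine ⟨r, fun i => ?_, fun x hx => absurd ⟨x, hx⟩ h⟩
    fin_cases i
    · exact (PP0 n _).2 h0
    · exact (PP1 n _).2 h1
    · exact (PP2 n _).2 h2

/-- The displacement set over `e` -/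
def PhiE (e : Q3) : Set (HH n) := {g | g.q = e ∧ ∃ z : ℤ,
  ((chi n e).den : ℚ) * g.v = z ∧ |(z : ℚ)| ≤ (chi n e).den * (2 + |chi n e|)}

theorem PhiE_finite (e : Q3) : (PhiE n e).Finite := by
  set D : ℚ := ((chi n e).den : ℚ) with hD
  have hDpos : 0 < D := by rw [hD]; exact_mod_cast (chi n e).den_pos
  obtain ⟨b, hb⟩ := exists_nat_ge (D * (2 + |chi n e|))
  have hf : ((fun z : ℤ => (z : ℚ) / D) '' Set.Icc (-(b : ℤ)) b).Finite :=
    (Set.finite_Icc _ _).image _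
  have hinj : Function.Injective (fun g : HH n => ((g.v : ℚ), g.q)) := by
    intro g g' h
    simp only [Prod.mk.injEq] at h
    ext1
    · exact Subtype.ext h.1
    · exact h.2
  refine Set.Finite.subset (Set.Finite.preimage hinj.injOn (hf.prod (Set.finite_singleton e))) ?_
  rintro g ⟨h1, z, h2, h3⟩
  refine ⟨⟨z, ?_, ?_⟩, h1⟩
  · have : |(z : ℚ)| ≤ b := h3.trans hb
    rw [abs_le] at this
    constructor
    · exact_mod_cast this.1
    · exact_mod_cast this.2
  · show (z : ℚ) / D = g.v
    rw [← h2, hD]; field_simp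

theorem disp (e : Q3) (w κ : Fin 3 → A n) (hκ : ∀ i, PP n i (κ i)) (r r' : A n)
    (hr : IsR n w r) (hr' : IsR n (e⁻¹ • (w + κ)) r') :
    (⟨-r + e • r', e⟩ : HH n) ∈ PhiE n e := by
  refine ⟨rfl, ?_⟩
  have hx : ∀ i, (((-r + e • r' : A n)) : ℚ) = κ i + (w i - r) -
      chi n e * (((e⁻¹ • (w + κ)) i : A n) - r') := by
    intro i
    have : chi n e * (((e⁻¹ • (w + κ)) i : A n) : ℚ) = w i + κ i := by
      rw [← coe_smul, ← Pi.smul_apply, smul_inv_smul]; rfl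
    rw [mul_sub, this]
    push_cast
    rw [coe_smul]
    ring
  show ∃ z : ℤ, ((chi n e).den : ℚ) * ((-r + e • r' : A n) : ℚ) = z ∧ _
  have hden : ((chi n e).den : ℚ) * chi n e = (chi n e).num := by
    rw [mul_comm]; exact Rat.mul_den_eq_num _
  have hmem : ∀ S : Subring ℚ, ∀ i, (κ i : ℚ) ∈ S → ((w i : ℚ) - r) ∈ S →
      ((((e⁻¹ • (w + κ)) i : A n) : ℚ) - r') ∈ S →
      ((chi n e).den : ℚ) * ((-r + e • r' : A n) : ℚ) ∈ S := by
    intro S i h1 h2 h3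
    rw [hx i, mul_sub, ← mul_assoc, hden]
    exact sub_mem (mul_mem (natCast_mem S _) (add_mem h1 h2)) (mul_mem (int_mem S _) h3)
  have m1 := hmem (Z1 (M1 n)) 1 ((PP1 n _).1 (hκ 1)) ((PP1 n _).1 (hr 1)) ((PP1 n _).1 (hr' 1))
  have m2 := hmem (Z1 (N1 n)) 2 ((PP2 n _).1 (hκ 2)) ((PP2 n _).1 (hr 2)) ((PP2 n _).1 (hr' 2))
  obtain ⟨z, hz⟩ := Z1_inter (M1_ne n) (cop n) m1 m2
  refine ⟨z, hz, ?_⟩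
  have a1 := (PP0 n _).1 (hκ 0)
  have a2 := (PP0 n _).1 (hr 0)
  have a3 := (PP0 n _).1 (hr' 0)
  rw [← hz, abs_mul, Nat.abs_cast]
  apply mul_le_mul_of_nonneg_left _ (Nat.cast_nonneg _)
  rw [hx 0]
  calc _ ≤ |(κ 0 : ℚ) + (w 0 - r)| + |chi n e * (((e⁻¹ • (w + κ)) 0 : A n) - r')| := abs_sub _ _
    _ ≤ (|(κ 0 : ℚ)| + |(w 0 : ℚ) - r|) + |chi n e * (((e⁻¹ • (w + κ)) 0 : A n) - r')| := by
      gcongr; exact abs_add_le _ _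
    _ ≤ (1 + 1) + |chi n e| * 1 := by
      rw [abs_mul]; gcongr
    _ = _ := by ring

theorem exists_phi : ∃ φ : GG n → HH n, (∀ h, φ (iota n h) = h) ∧ ∃ Φ : Set (HH n), Φ.Finite ∧
    ∀ g, ∀ k ∈ KK n, (φ g)⁻¹ * φ (g * k) ∈ Φ := by
  choose r hr hr' using exists_r' n
  refine ⟨fun g => ⟨g.q • r (g.q⁻¹ • g.v), g.q⟩, ?_, ⋃ e ∈ Q3.box, PhiE n e,
    Q3.box_finite.biUnion (fun e _ => PhiE_finite n e), ?_⟩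
  · intro h
    have : r ((iota n h).q⁻¹ • (iota n h).v) = h.q⁻¹ • h.v := by
      apply hr'
      rfl
    beta_reduce
    rw [this]
    ext1
    · exact smul_inv_smul h.q h.v
    · rfl
  · rintro g k ⟨h1, h2⟩
    refine Set.mem_biUnion h2 ?_
    have := disp n k.q (g.q⁻¹ • g.v) k.v h1 _ _ (hr (g.q⁻¹ • g.v))
      (hr (k.q⁻¹ • (g.q⁻¹ • g.v + k.v)))
    convert this using 1
    have e : (g * k).q⁻¹ • (g * k).v = k.q⁻¹ • (g.q⁻¹ • g.v + k.v) := by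
      rw [Aff.mul_q, Aff.mul_v, mul_inv, mul_comm, mul_smul, smul_add, inv_smul_smul]
    beta_reduce
    rw [e]
    ext1
    · simp [mul_smul]
    · simp

theorem ga_zpow (z : ℤ) : (ga n) ^ z = ⟨⟨z, int_mem _ z⟩, 1⟩ := by
  have hk : ∀ k : ℕ, (ga n) ^ k = ⟨⟨(k : ℤ), int_mem _ k⟩, 1⟩ := by
    intro k
    induction k with
    | zero => ext <;> simp
    | succ k ih =>
      rw [pow_succ, ih]
      ext1
      · apply Subtype.ext; simp [ga]
      · simp [ga]
  obtain ⟨k, rfl | rfl⟩ := z.eq_nat_or_neg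
  · rw [zpow_natCast, hk]
  · rw [zpow_neg, zpow_natCast, hk]
    ext1
    · apply Subtype.ext; simp
    · simp

theorem SS_gen : Subgroup.closure (SS n) = ⊤ := by
  rw [eq_top_iff]
  rintro ⟨x, e⟩ -
  have hsec : ∀ e : Q3, Aff.sec e ∈ Subgroup.closure (SS n) := by
    intro e
    rw [← Q3.NF_prod e]
    simp only [Q3.NF, List.prod_append, Q3.P_prod, map_mul, map_zpow]
    refine mul_mem (zpow_mem (Subgroup.subset_closure ?_) _) (mul_mem
      (zpow_mem (Subgroup.subset_closure ?_) _) (zpow_mem (Subgroup.subset_closure ?_) _)) <;>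
      simp [SS]
  have hga : ∀ z : ℤ, (ga n) ^ z ∈ Subgroup.closure (SS n) := fun z =>
    zpow_mem (Subgroup.subset_closure (by simp [SS])) _
  obtain ⟨k, z, h⟩ := mem_Z1.1 x.2
  have key : (⟨x, e⟩ : HH n) = (Aff.sec (⟨k, k, 0⟩ : Q3))⁻¹ * (ga n) ^ z *
      Aff.sec (⟨k, k, 0⟩ : Q3) * Aff.sec e := by
    rw [ga_zpow]
    ext1
    · apply Subtype.ext
      simp only [Aff.mul_v, Aff.inv_v, Aff.inv_q, Aff.mul_q, Aff.sec_v, Aff.sec_q, smul_zero,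
        neg_zero, zero_add, add_zero]
      rw [coe_smul]
      have : chi n (⟨k, k, 0⟩ : Q3)⁻¹ * chi n ⟨k, k, 0⟩ = 1 := by
        rw [← chi_mul, inv_mul_cancel, chi_one]
      have h2 : chi n ⟨k, k, 0⟩ = ((M1 n * N1 n : ℤ) : ℚ) ^ k := by
        simp [chi]; ring
      show (x : ℚ) = chi n (⟨k, k, 0⟩ : Q3)⁻¹ * (z : ℚ)
      rw [← h, ← h2]
      linear_combination (-(x : ℚ)) * this
    · simp
  rw [key]
  exact mul_mem (mul_mem (mul_mem (inv_mem (hsec _)) (hga z)) (hsec _)) (hsec e)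

theorem chi_u : chi n Q3.u = n := by simp [chi, Q3.u]

/-- The images of the generators of `BS(1,n)`. -/
def gens (b : Bool) : HH n := if b then Aff.sec Q3.u else ga n

theorem rel_ok : ∀ r ∈ BSrel n, FreeGroup.lift (gens n) r = 1 := by
  intro r hr
  rw [BSrel, Set.mem_singleton_iff] at hr
  subst hr
  simp only [map_mul, map_inv, map_zpow, FreeGroup.lift_apply_of, gens, if_true, Bool.false_eq_true,
    if_false, ga_zpow]
  ext1
  · apply Subtype.ext
    simp [ga, chi_u]
  · simp [ga]

/-- The homomorphism `BS(1,n) → H`. -/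
def emb : BS n →* HH n := PresentedGroup.toGroup (rel_ok n)

/-- generators -/
def bt : BS n := PresentedGroup.of true
def bx : BS n := PresentedGroup.of false

theorem emb_t : emb n (bt n) = Aff.sec Q3.u := by
  exact PresentedGroup.toGroup.of (rel_ok n)
theorem emb_x : emb n (bx n) = ga n := by
  exact PresentedGroup.toGroup.of (rel_ok n)

theorem bs_rel : bt n * bx n * (bt n)⁻¹ = bx n ^ n := by
  have h : (PresentedGroup.mk (BSrel n) (FreeGroup.of true * FreeGroup.of false *
      (FreeGroup.of true)⁻¹ * (FreeGroup.of false) ^ (-n))) = 1 := by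
    apply PresentedGroup.one_of_mem
    exact Set.mem_singleton _
  have h' : bt n * bx n * (bt n)⁻¹ * bx n ^ (-n) = 1 := by
    simp only [map_mul, map_inv, map_zpow] at h
    exact h
  rw [zpow_neg] at h'
  exact mul_inv_eq_one.1 h'

theorem bs_rel_pow (i : ℕ) (z : ℤ) : bt n ^ i * bx n ^ z = bx n ^ (n ^ i * z) * bt n ^ i := by
  have h1 : ∀ z : ℤ, bt n * bx n ^ z = bx n ^ (n * z) * bt n := by
    intro z
    rw [zpow_mul, ← bs_rel, conj_zpow]; group
  induction i generalizing z with
  | zero => simp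
  | succ i ih =>
    rw [pow_succ, mul_assoc, h1, ← mul_assoc, ih, mul_assoc]
    congr 2
    ring

theorem bs_closure : Subgroup.closure ({bt n, bx n} : Set (BS n)) = ⊤ := by
  have h := PresentedGroup.closure_range_of (BSrel n)
  have e : Set.range (PresentedGroup.of : Bool → PresentedGroup (BSrel n)) = {bt n, bx n} := by
    ext g
    simp only [Set.mem_range, Bool.exists_bool, Set.mem_insert_iff, Set.mem_singleton_iff]
    constructor
    · rintro (h | h)
      · exact Or.inr h.symm
      · exact Or.inl h.symm
    · rintro (h | h)
      · exact Or.inr h.symm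
      · exact Or.inl h.symm
  exact e ▸ h

theorem bs_form (g : BS n) : ∃ (i k : ℕ) (z : ℤ), g = (bt n ^ i)⁻¹ * bx n ^ z * bt n ^ k := by
  have hg : g ∈ Subgroup.closure ({bt n, bx n} : Set (BS n)) := by rw [bs_closure]; trivial
  have hx : ∀ w : ℤ, ∀ y : BS n, (∃ (i k : ℕ) (z : ℤ), y = (bt n ^ i)⁻¹ * bx n ^ z * bt n ^ k) →
      ∃ (i k : ℕ) (z : ℤ), bx n ^ w * y = (bt n ^ i)⁻¹ * bx n ^ z * bt n ^ k := by
    rintro w _ ⟨i, k, z, rfl⟩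
    refine ⟨i, k, n ^ i * w + z, ?_⟩
    have h := bs_rel_pow n i w
    have h' : bx n ^ w = (bt n ^ i)⁻¹ * (bx n ^ (n ^ i * w) * bt n ^ i) := by
      rw [← h]; group
    rw [h', zpow_add]
    simp only [mul_assoc, mul_inv_cancel_left]
  induction hg using Subgroup.closure_induction_left with
  | one => exact ⟨0, 0, 0, by simp⟩
  | mul_left x hx' y _ ih =>
    rcases hx' with rfl | rfl
    · obtain ⟨i, k, z, rfl⟩ := ih
      rcases i with _ | i
      · refine ⟨0, k + 1, n * z, ?_⟩
        have h := bs_rel_pow n 1 z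
        simp only [pow_one] at h
        rw [pow_zero, inv_one, one_mul, one_mul, ← mul_assoc, h, mul_assoc, pow_succ']
      · refine ⟨i, k, z, ?_⟩
        rw [pow_succ]; group
    · simpa using hx 1 y ih
  | inv_mul_cancel x hx' y _ ih =>
    rcases hx' with rfl | rfl
    · obtain ⟨i, k, z, rfl⟩ := ih
      refine ⟨i + 1, k, z, ?_⟩
      rw [pow_succ, mul_inv_rev]; simp only [mul_assoc]
    · simpa using hx (-1) y ih

theorem emb_inj : Function.Injective (emb n) := by
  rw [injective_iff_map_eq_one]
  intro g hg
  obtain ⟨i, k, z, rfl⟩ := bs_form n g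
  simp only [map_mul, map_inv, map_pow, map_zpow, emb_t, emb_x, ga_zpow] at hg
  have hp : ∀ k : ℕ, (Aff.sec Q3.u : HH n) ^ k = Aff.sec (Q3.u ^ k) := fun k => (map_pow _ _ _).symm
  rw [hp, hp] at hg
  have h1 := congrArg Aff.q hg
  have h2 := congrArg Aff.v hg
  have hik : i = k := by
    have := congrArg Q3.c h1
    simp [Q3.u, -map_pow] at this
    omega
  have hz : z = 0 := by
    have h3 := congrArg (Subtype.val : A n → ℚ) h2
    simp [-map_pow] at h3
    rcases h3 with h3 | h3
    · exact absurd h3 (chi_ne n _)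
    · exact h3
  subst hik hz
  simp

end Final
end Quad
/-- Main Theorem of Cornulier–Tessera: `BS(1,n)` embeds into a
finitely presented metabelian group with quadratic Dehn function. -/
theorem stmt12 (n : ℤ) (hn : n ≠ 0) :
    ∃ (H : Type) (_ : Group H) (f : BS n →* H),
      Function.Injective f ∧
      (∀ x y : commutator H, x * y = y * x) ∧
      ∃ S : Set H, S.Finite ∧ Subgroup.closure S = ⊤ ∧
        ∃ R : Set (FreeGroup S), R.Finite ∧ (∀ r ∈ R, pi S r = 1) ∧
          ∃ C : ℝ, ∀ w : FreeGroup S, pi S w = 1 →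
            ∃ L : List (FreeGroup S × FreeGroup S),
              (L.length : ℝ) ≤ C * (len S w : ℝ) ^ 2 + C ∧
              (∀ p ∈ L, p.2 ∈ R ∨ p.2⁻¹ ∈ R) ∧
              w = (L.map fun p => p.1 * p.2 * p.1⁻¹).prod := by
  haveI : NeZero n := ⟨hn⟩
  obtain ⟨φ, hφ, Φ, hΦf, hΦ⟩ := Quad.exists_phi n
  obtain ⟨C, hC⟩ := Quad.fillG n
  have hSf : (Quad.SS n).Finite := by simp [Quad.SS]
  exact ⟨Quad.HH n, inferInstance, Quad.emb n, Quad.emb_inj n, Quad.Aff.metab, Quad.SS n, hSf,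
    Quad.SS_gen n, Quad.transfer φ (Quad.KK n) (Quad.iota n) hφ Φ hΦf hΦ (Quad.SS n) hSf
      (Quad.SS_gen n) C hC⟩
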